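/- Let μ be a Borel probability measure on SL₂(ℝ) with a finite exponential moment whose support generates a Zariski dense subgroup. There exist constants C > 0 and ε' > 0 such that for all s > 0, a > 0, t > 10s, and all x, x' ∈ X, Σ_{n≥0} μ^{*n}{ g : d(gx, x') ≤ e^{−s} and κ(g) − t ∈ [0, a] } ≤ C (1 + a)² e^{−ε' s}. -/

import Mathlib

open MeasureTheory Filter

noncomputable section

abbrev SL2 := Matrix.SpecialLinearGroup (Fin 2) ℝ

abbrev PX := Projectivization ℝ (Fin 2 → ℝ)

instance : TopologicalSpace SL2 := instTopologicalSpaceSubtype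
instance : TopologicalSpace PX := instTopologicalSpaceQuotient
instance : MeasurableSpace SL2 := borel _
instance : MeasurableSpace PX := borel _

/-- Euclidean norm on ℝ². -/
def enorm2 (v : Fin 2 → ℝ) : ℝ := Real.sqrt (v 0 ^ 2 + v 1 ^ 2)

/-- Operator norm of g ∈ SL₂(ℝ) w.r.t. the Euclidean norm on ℝ². -/
def opNorm (g : SL2) : ℝ :=
  ‖Matrix.toEuclideanCLM (𝕜 := ℝ) (n := Fin 2) (g : Matrix (Fin 2) (Fin 2) ℝ)‖

/-- Cartan projection κ(g) = log ‖g‖. -/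
def kappa (g : SL2) : ℝ := Real.log (opNorm g)

/-- The projective action of SL₂(ℝ) on ℙ(ℝ²). -/
def act (g : SL2) (x : PX) : PX :=
  Projectivization.map ((Matrix.SpecialLinearGroup.toLin' g).toLinearMap)
    (LinearEquiv.injective _) x

/-- The norm cocycle σ(g, ℝv) = log (‖gv‖/‖v‖). -/
def cocycle (g : SL2) (x : PX) : ℝ :=
  Real.log (enorm2 ((g : Matrix (Fin 2) (Fin 2) ℝ).mulVec x.rep) / enorm2 x.rep)

/-- The sine distance d(ℝv, ℝw) = |det(v,w)|/(‖v‖‖w‖) on ℙ(ℝ²). -/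
def projDist (x y : PX) : ℝ :=
  |x.rep 0 * y.rep 1 - x.rep 1 * y.rep 0| / (enorm2 x.rep * enorm2 y.rep)

/-- An angle θ(x) ∈ ℝ representing x = ℝ(cos θ, sin θ). -/
def pangle (x : PX) : ℝ := Complex.arg (x.rep 0 + x.rep 1 * Complex.I)

/-- The (topological) support of a measure. -/
def measSupp (μ : Measure SL2) : Set SL2 :=
  {g | ∀ U : Set SL2, IsOpen U → g ∈ U → 0 < μ U}

/-- μ has a finite exponential moment. -/
def HasExpMoment (μ : Measure SL2) : Prop :=
  ∃ ε₁ > (0 : ℝ), ∫⁻ g, ENNReal.ofReal (opNorm g ^ ε₁) ∂μ < ⊤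

/-- The group generated by the support of μ is Zariski dense in SL₂(ℝ),
equivalently it is not solvable. -/
def ZariskiDense (μ : Measure SL2) : Prop :=
  ¬ IsSolvable (Subgroup.closure (measSupp μ))

/-- ν is μ-stationary: μ ∗ ν = ν. -/
def IsMuStationary (μ : Measure SL2) (ν : Measure PX) : Prop :=
  μ.bind (fun g => ν.map (act g)) = ν

/-- The product g₁ ⋯ gₙ of a word (g₁, …, gₙ). -/
def word {n : ℕ} (g : Fin n → SL2) : SL2 := (List.ofFn g).prod

/-- The product measure μ^{⊗n} on words of length n. -/
def μpi (μ : Measure SL2) (n : ℕ) : Measure (Fin n → SL2) := Measure.pi fun _ => μ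

namespace RW

abbrev E2 := EuclideanSpace ℝ (Fin 2)

/-- The linear map of g on the Euclidean plane. -/
def T (g : SL2) : E2 →L[ℝ] E2 :=
  Matrix.toEuclideanCLM (𝕜 := ℝ) (n := Fin 2) (g : Matrix (Fin 2) (Fin 2) ℝ)

lemma opNorm_eq (g : SL2) : opNorm g = ‖T g‖ := rfl

lemma T_zero (g : SL2) (v : E2) : (T g v) 0 = g 0 0 * v 0 + g 0 1 * v 1 := by
  simp [T, Matrix.mulVec, dotProduct, Fin.sum_univ_two]

lemma T_one' (g : SL2) (v : E2) : (T g v) 1 = g 1 0 * v 0 + g 1 1 * v 1 := by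
  simp [T, Matrix.mulVec, dotProduct, Fin.sum_univ_two]

lemma T_mul (g h : SL2) (v : E2) : T (g * h) v = T g (T h v) := by
  simp [T]

lemma T_one (v : E2) : T 1 v = v := by
  simp [T]

lemma det_eq (g : SL2) : g 0 0 * g 1 1 - g 0 1 * g 1 0 = 1 := by
  have := g.2
  rw [Matrix.det_fin_two] at this
  exact this

lemma T_inv_T (g : SL2) (v : E2) : T g⁻¹ (T g v) = v := by
  rw [← T_mul, inv_mul_cancel, T_one]

lemma T_T_inv (g : SL2) (v : E2) : T g (T g⁻¹ v) = v := by
  rw [← T_mul, mul_inv_cancel, T_one]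

/-- The determinant of two plane vectors. -/
def dt (v w : E2) : ℝ := v 0 * w 1 - v 1 * w 0

lemma dt_T (g : SL2) (v w : E2) : dt (T g v) (T g w) = dt v w := by
  simp only [dt, T_zero, T_one']
  linear_combination (v 0 * w 1 - v 1 * w 0) * det_eq g

lemma norm_sq_eq (v : E2) : ‖v‖ ^ 2 = v 0 ^ 2 + v 1 ^ 2 := by
  rw [EuclideanSpace.norm_sq_eq]; simp [Fin.sum_univ_two]

lemma abs_dt_le (v w : E2) : |dt v w| ≤ ‖v‖ * ‖w‖ := by
  apply abs_le_of_sq_le_sq _ (by positivity)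
  rw [mul_pow, norm_sq_eq, norm_sq_eq, dt]
  nlinarith [sq_nonneg (v 0 * w 0 + v 1 * w 1)]

/-- Rotation by a quarter turn. -/
def rot (v : E2) : E2 := WithLp.toLp 2 ![-v 1, v 0]

@[simp] lemma rot_zero (v : E2) : rot v 0 = -v 1 := rfl
@[simp] lemma rot_one (v : E2) : rot v 1 = v 0 := rfl

lemma norm_rot (v : E2) : ‖rot v‖ = ‖v‖ := by
  have : ‖rot v‖ ^ 2 = ‖v‖ ^ 2 := by
    rw [norm_sq_eq, norm_sq_eq]; simp; ring
  exact (pow_left_inj₀ (norm_nonneg _) (norm_nonneg _) two_ne_zero).1 this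

lemma dt_rot (v : E2) : dt v (rot v) = ‖v‖ ^ 2 := by
  rw [norm_sq_eq, dt]; simp; ring

lemma norm_T_le (g : SL2) (v : E2) : ‖T g v‖ ≤ opNorm g * ‖v‖ := (T g).le_opNorm v

lemma opNorm_nonneg (g : SL2) : 0 ≤ opNorm g := norm_nonneg _

lemma opNorm_inv_le (g : SL2) : opNorm g⁻¹ ≤ opNorm g := by
  refine ContinuousLinearMap.opNorm_le_bound _ (opNorm_nonneg g) fun v => ?_
  change ‖T g⁻¹ v‖ ≤ _
  set z := T g⁻¹ v with hz
  have h1 : ‖z‖ ^ 2 ≤ opNorm g * ‖v‖ * ‖z‖ := by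
    rw [← dt_rot, ← dt_T g, hz, T_T_inv, ← hz]
    refine (le_abs_self _).trans ((abs_dt_le _ _).trans ?_)
    have := norm_T_le g (rot z)
    rw [norm_rot] at this
    nlinarith [norm_nonneg v]
  rcases (norm_nonneg z).eq_or_lt with h | h
  · rw [← h]; exact mul_nonneg (opNorm_nonneg g) (norm_nonneg v)
  · nlinarith

lemma opNorm_inv (g : SL2) : opNorm g⁻¹ = opNorm g :=
  le_antisymm (opNorm_inv_le g) (by simpa using opNorm_inv_le g⁻¹)

lemma opNorm_mul_le (g h : SL2) : opNorm (g * h) ≤ opNorm g * opNorm h := by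
  simp only [opNorm, Matrix.SpecialLinearGroup.coe_mul, map_mul]
  exact norm_mul_le _ _

lemma opNorm_one : opNorm 1 = 1 := by
  simp [opNorm]

lemma one_le_opNorm (g : SL2) : 1 ≤ opNorm g := by
  have := opNorm_mul_le g g⁻¹
  rw [mul_inv_cancel, opNorm_one, opNorm_inv] at this
  nlinarith [opNorm_nonneg g]

lemma opNorm_pos (g : SL2) : 0 < opNorm g := lt_of_lt_of_le one_pos (one_le_opNorm g)

lemma le_norm_T (g : SL2) (v : E2) : ‖v‖ ≤ opNorm g * ‖T g v‖ := by
  have := norm_T_le g⁻¹ (T g v)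
  rwa [T_inv_T, opNorm_inv] at this

lemma norm_T_pos (g : SL2) {v : E2} (hv : 0 < ‖v‖) : 0 < ‖T g v‖ := by
  have := le_norm_T g v
  by_contra h
  have : ‖T g v‖ = 0 := le_antisymm (not_lt.1 h) (norm_nonneg _)
  simp_all

lemma kappa_nonneg (g : SL2) : 0 ≤ kappa g := Real.log_nonneg (one_le_opNorm g)

lemma kappa_mul_le (g h : SL2) : kappa (g * h) ≤ kappa g + kappa h := by
  rw [kappa, kappa, kappa, ← Real.log_mul (opNorm_pos g).ne' (opNorm_pos h).ne']
  exact Real.log_le_log (opNorm_pos _) (opNorm_mul_le g h)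

lemma kappa_inv (g : SL2) : kappa g⁻¹ = kappa g := by rw [kappa, kappa, opNorm_inv]

lemma kappa_one : kappa 1 = 0 := by rw [kappa, opNorm_one, Real.log_one]

lemma exp_kappa (g : SL2) : Real.exp (kappa g) = opNorm g := Real.exp_log (opNorm_pos g)

lemma continuous_val : Continuous fun g : SL2 => (g : Matrix (Fin 2) (Fin 2) ℝ) :=
  continuous_subtype_val

lemma continuous_entry (i j : Fin 2) : Continuous fun g : SL2 => g i j :=
  continuous_val.matrix_elem i j

lemma continuous_T : Continuous T := by
  have : Continuous fun A : Matrix (Fin 2) (Fin 2) ℝ =>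
      Matrix.toEuclideanCLM (𝕜 := ℝ) (n := Fin 2) A :=
    LinearMap.continuous_of_finiteDimensional
      (Matrix.toEuclideanCLM (𝕜 := ℝ) (n := Fin 2)).toAlgEquiv.toLinearMap
  exact this.comp continuous_val

lemma continuous_opNorm : Continuous opNorm := continuous_T.norm

lemma continuous_kappa : Continuous kappa :=
  continuous_opNorm.log fun g => (opNorm_pos g).ne'

instance : IsTopologicalGroup SL2 := Matrix.SpecialLinearGroup.topologicalGroup
instance : BorelSpace SL2 := ⟨rfl⟩
instance : SecondCountableTopology SL2 := by
  have : SecondCountableTopology (Matrix (Fin 2) (Fin 2) ℝ) :=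
    inferInstanceAs (SecondCountableTopology (Fin 2 → Fin 2 → ℝ))
  exact Topology.IsEmbedding.subtypeVal.secondCountableTopology
instance : T2Space SL2 := by
  unfold SL2 Matrix.SpecialLinearGroup
  infer_instance

example : MeasurableMul₂ SL2 := inferInstance
example : MeasurableInv SL2 := inferInstance

lemma exists_norm_eq (g : SL2) : ∃ v : E2, ‖v‖ = 1 ∧ ‖T g v‖ = opNorm g := by
  have hne : (Metric.sphere (0 : E2) 1).Nonempty := NormedSpace.sphere_nonempty.2 zero_le_one
  obtain ⟨v, hv, hmax⟩ := (isCompact_sphere (0 : E2) 1).exists_isMaxOn hne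
    (f := fun v => ‖T g v‖) (by fun_prop)
  have hv1 : ‖v‖ = 1 := by simpa using hv
  refine ⟨v, hv1, le_antisymm (by simpa [hv1] using norm_T_le g v) ?_⟩
  refine ContinuousLinearMap.opNorm_le_of_unit_norm (norm_nonneg _) fun x hx => ?_
  exact hmax (by simpa using hx)

lemma abs_entry_le (g : SL2) (i j : Fin 2) : |g i j| ≤ opNorm g := by
  have h := norm_T_le g (EuclideanSpace.single j (1:ℝ))
  rw [PiLp.norm_single, norm_one, mul_one] at h
  refine le_trans ?_ h
  have h2 := EuclideanSpace.norm_eq (T g (EuclideanSpace.single j (1:ℝ)))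
  have h3 : (T g (EuclideanSpace.single j (1:ℝ))) i = g i j := by
    fin_cases i <;> fin_cases j <;> simp [T_zero, T_one']
  rw [← h3]
  exact PiLp.norm_apply_le (T g (EuclideanSpace.single j (1:ℝ))) i

lemma isCompact_opNorm_le (R : ℝ) : IsCompact {g : SL2 | opNorm g ≤ R} := by
  have hemb : Topology.IsClosedEmbedding fun g : SL2 => (g : Matrix (Fin 2) (Fin 2) ℝ) :=
    Matrix.SpecialLinearGroup.isClosedEmbedding_val
  have hK : IsCompact (Set.pi Set.univ fun _ : Fin 2 => Set.pi Set.univ fun _ : Fin 2 =>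
      Set.Icc (-R) R) :=
    isCompact_univ_pi fun _ => isCompact_univ_pi fun _ => isCompact_Icc
  refine (hemb.isCompact_preimage hK).of_isClosed_subset
    (isClosed_le continuous_opNorm continuous_const) ?_
  intro g hg
  intro i _ j _
  exact abs_le.1 ((abs_entry_le g i j).trans hg)

lemma isCompact_kappa_le (R : ℝ) : IsCompact {g : SL2 | kappa g ≤ R} := by
  refine (isCompact_opNorm_le (Real.exp R)).of_isClosed_subset
    (isClosed_le continuous_kappa continuous_const) ?_
  intro g hg
  change opNorm g ≤ _
  rw [← exp_kappa]; exact Real.exp_le_exp.2 hg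

/-- transpose -/
def tr (g : SL2) : SL2 := Matrix.SpecialLinearGroup.transpose g

lemma tr_apply (g : SL2) (i j : Fin 2) : tr g i j = g j i := rfl

lemma tr_mul (g h : SL2) : tr (g * h) = tr h * tr g := by
  apply Subtype.ext
  simp [tr, Matrix.transpose_mul]

lemma tr_tr (g : SL2) : tr (tr g) = g := rfl

lemma tr_one : tr 1 = 1 := by
  apply Subtype.ext
  simp [tr]

lemma continuous_tr : Continuous tr :=
  Continuous.subtype_mk (continuous_val.matrix_transpose) _

/-- standard inner product -/
def ip (v w : E2) : ℝ := v 0 * w 0 + v 1 * w 1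

lemma ip_T (g : SL2) (v w : E2) : ip (T g v) w = ip v (T (tr g) w) := by
  simp only [ip, T_zero, T_one', tr_apply]; ring

lemma ip_self (v : E2) : ip v v = ‖v‖ ^ 2 := by rw [norm_sq_eq, ip]; ring

lemma abs_ip_le (v w : E2) : |ip v w| ≤ ‖v‖ * ‖w‖ := by
  apply abs_le_of_sq_le_sq _ (by positivity)
  rw [mul_pow, norm_sq_eq, norm_sq_eq, ip]
  nlinarith [sq_nonneg (v 0 * w 1 - v 1 * w 0)]

lemma opNorm_tr_le (g : SL2) : opNorm (tr g) ≤ opNorm g := by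
  refine ContinuousLinearMap.opNorm_le_bound _ (opNorm_nonneg g) fun v => ?_
  change ‖T (tr g) v‖ ≤ _
  set z := T (tr g) v with hz
  have h1 : ‖z‖ ^ 2 ≤ opNorm g * ‖v‖ * ‖z‖ := by
    rw [← ip_self]
    nth_rw 2 [hz]
    rw [← ip_T]
    refine (le_abs_self _).trans ((abs_ip_le _ _).trans ?_)
    have := norm_T_le g z
    nlinarith [norm_nonneg v]
  rcases (norm_nonneg z).eq_or_lt with h | h
  · rw [← h]; exact mul_nonneg (opNorm_nonneg g) (norm_nonneg v)
  · nlinarith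

lemma opNorm_tr (g : SL2) : opNorm (tr g) = opNorm g :=
  le_antisymm (opNorm_tr_le g) (by simpa [tr_tr] using opNorm_tr_le (tr g))

/-- two short images force a small angle -/
lemma opNorm_mul_dt_le (g : SL2) (u w : E2) :
    opNorm g * |dt u w| ≤ ‖w‖ * ‖T g u‖ + ‖u‖ * ‖T g w‖ := by
  obtain ⟨z, hz1, hz⟩ := exists_norm_eq g
  have hlin : dt u w • z = dt z w • u - dt z u • w := by
    ext i
    fin_cases i <;> simp [dt] <;> ring
  have h2 : dt u w • T g z = dt z w • T g u - dt z u • T g w := by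
    rw [← map_smul, hlin, map_sub, map_smul, map_smul]
  have h3 : |dt u w| * opNorm g = ‖dt z w • T g u - dt z u • T g w‖ := by
    rw [← h2, norm_smul, hz, Real.norm_eq_abs]
  rw [mul_comm, h3]
  refine (norm_sub_le _ _).trans ?_
  rw [norm_smul, norm_smul, Real.norm_eq_abs, Real.norm_eq_abs]
  have a1 := abs_dt_le z w
  have a2 := abs_dt_le z u
  rw [hz1, one_mul] at a1 a2
  gcongr

end RW

namespace RW

/-- convolution powers -/
def cpow (μ : Measure SL2) : ℕ → Measure SL2
  | 0 => Measure.dirac 1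
  | n + 1 => Measure.mconv μ (cpow μ n)

instance cpow_prob (μ : Measure SL2) [IsProbabilityMeasure μ] (n : ℕ) :
    IsProbabilityMeasure (cpow μ n) := by
  induction n with
  | zero => unfold cpow; infer_instance
  | succ n ih => unfold cpow; infer_instance

lemma cpow_one (μ : Measure SL2) [IsProbabilityMeasure μ] : cpow μ 1 = μ := by
  simp [cpow, Measure.mconv_dirac_one]

lemma cpow_add (μ : Measure SL2) [IsProbabilityMeasure μ] (m n : ℕ) :
    cpow μ (m + n) = Measure.mconv (cpow μ m) (cpow μ n) := by
  induction m with
  | zero => simp [cpow, Measure.dirac_one_mconv]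
  | succ m ih =>
    rw [Nat.succ_add]
    change Measure.mconv μ (cpow μ (m + n)) = Measure.mconv (Measure.mconv μ (cpow μ m)) _
    rw [ih, Measure.mconv_assoc]

lemma lint_add (μ : Measure SL2) [IsProbabilityMeasure μ] (m n : ℕ) {f : SL2 → ENNReal}
    (hf : Measurable f) :
    ∫⁻ g, f g ∂(cpow μ (m + n)) = ∫⁻ g, ∫⁻ h, f (g * h) ∂(cpow μ n) ∂(cpow μ m) := by
  rw [cpow_add, Measure.lintegral_mconv hf]

lemma lint_succ (μ : Measure SL2) [IsProbabilityMeasure μ] (n : ℕ) {f : SL2 → ENNReal}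
    (hf : Measurable f) :
    ∫⁻ g, f g ∂(cpow μ (n + 1)) = ∫⁻ g, ∫⁻ h, f (g * h) ∂(cpow μ n) ∂μ := by
  rw [cpow, Measure.lintegral_mconv hf]

lemma lint_add' (μ : Measure SL2) [IsProbabilityMeasure μ] (m n : ℕ) {f : SL2 → ENNReal}
    (hf : Measurable f) :
    ∫⁻ g, f g ∂(cpow μ (m + n)) = ∫⁻ h, ∫⁻ g, f (g * h) ∂(cpow μ m) ∂(cpow μ n) := by
  rw [lint_add μ m n hf, lintegral_lintegral_swap]
  exact (hf.comp measurable_mul).aemeasurable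

lemma lint_succ' (μ : Measure SL2) [IsProbabilityMeasure μ] (n : ℕ) {f : SL2 → ENNReal}
    (hf : Measurable f) :
    ∫⁻ g, f g ∂(cpow μ (n + 1)) = ∫⁻ h, ∫⁻ g, f (g * h) ∂(cpow μ n) ∂μ := by
  rw [lint_add' μ n 1 hf, cpow_one]

lemma integrable_mconv {μ ν : Measure SL2} [IsProbabilityMeasure μ] [IsProbabilityMeasure ν]
    {f : SL2 → ℝ} (hf : Measurable f) (hi : Integrable f (Measure.mconv μ ν)) :
    Integrable (fun p : SL2 × SL2 => f (p.1 * p.2)) (μ.prod ν) := by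
  rw [Measure.mconv] at hi
  exact (integrable_map_measure hf.aestronglyMeasurable measurable_mul.aemeasurable).1 hi

lemma integral_mconv {μ ν : Measure SL2} [IsProbabilityMeasure μ] [IsProbabilityMeasure ν]
    {f : SL2 → ℝ} (hf : Measurable f) (hi : Integrable f (Measure.mconv μ ν)) :
    ∫ g, f g ∂(Measure.mconv μ ν) = ∫ g, ∫ h, f (g * h) ∂ν ∂μ := by
  have h2 := integrable_mconv hf hi
  rw [Measure.mconv, integral_map measurable_mul.aemeasurable hf.aestronglyMeasurable,
    integral_prod _ h2]

lemma word_cons {n : ℕ} (g : Fin (n + 1) → SL2) :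
    word g = g 0 * word (fun i : Fin n => g i.succ) := by
  simp [word, List.ofFn_succ]

lemma measurable_word {n : ℕ} : Measurable (word : (Fin n → SL2) → SL2) := by
  induction n with
  | zero =>
    have : (word : (Fin 0 → SL2) → SL2) = fun _ => 1 := by ext1 g; simp [word]
    rw [this]; exact measurable_const
  | succ n ih =>
    have : (word : (Fin (n + 1) → SL2) → SL2) =
      fun g => g 0 * word (fun i : Fin n => g i.succ) := by ext1 g; exact word_cons g
    rw [this]
    exact (measurable_pi_apply 0).mul (ih.comp (measurable_pi_lambda _ fun i =>
      measurable_pi_apply _))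

lemma map_word (μ : Measure SL2) [IsProbabilityMeasure μ] (n : ℕ) :
    (μpi μ n).map word = cpow μ n := by
  induction n with
  | zero =>
    have : (word : (Fin 0 → SL2) → SL2) = fun _ => 1 := by ext1 g; simp [word]
    rw [this, Measure.map_const, cpow]
    simp [μpi]
  | succ n ih =>
    have hmp := measurePreserving_piFinSuccAbove (fun _ : Fin (n + 1) => μ) 0
    have hw : (word : (Fin (n + 1) → SL2) → SL2) =
        (fun p : SL2 × (Fin n → SL2) => p.1 * word p.2) ∘
          (MeasurableEquiv.piFinSuccAbove (fun _ : Fin (n + 1) => SL2) 0) := by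
      ext1 g
      rw [word_cons]
      rfl
    have hm1 : Measurable (fun p : SL2 × (Fin n → SL2) => p.1 * word p.2) :=
      measurable_fst.mul (measurable_word.comp measurable_snd)
    rw [hw, ← Measure.map_map hm1 (MeasurableEquiv.measurable _)]
    have h1 : Measure.map (MeasurableEquiv.piFinSuccAbove (fun _ : Fin (n + 1) => SL2) 0)
        (μpi μ (n + 1)) = μ.prod (μpi μ n) := hmp.map_eq
    rw [h1, cpow, ← ih, Measure.mconv]
    have : IsProbabilityMeasure (μpi μ n) := by unfold μpi; infer_instance
    have h2 := Measure.map_prod_map μ (μpi μ n) (measurable_id) (measurable_word (n := n))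
    rw [Measure.map_id] at h2
    rw [h2, Measure.map_map measurable_mul (measurable_id.prodMap measurable_word)]
    rfl

lemma μpi_word (μ : Measure SL2) [IsProbabilityMeasure μ] (n : ℕ) {s : Set SL2}
    (hs : MeasurableSet s) : μpi μ n {w | word w ∈ s} = cpow μ n s := by
  rw [← map_word, Measure.map_apply measurable_word hs]; rfl

instance map_tr_prob (μ : Measure SL2) [IsProbabilityMeasure μ] :
    IsProbabilityMeasure (μ.map tr) :=
  Measure.isProbabilityMeasure_map continuous_tr.measurable.aemeasurable

lemma cpow_tr (μ : Measure SL2) [IsProbabilityMeasure μ] (n : ℕ) :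
    cpow (μ.map tr) n = (cpow μ n).map tr := by
  have hm := continuous_tr.measurable
  induction n with
  | zero => rw [cpow, cpow, Measure.map_dirac' hm, tr_one]
  | succ n ih =>
    rw [cpow, ih]
    refine Measure.ext_of_lintegral _ fun f hf => ?_
    have := map_tr_prob (cpow μ n)
    rw [Measure.lintegral_mconv hf, lintegral_map (by fun_prop) hm,
      lintegral_map hf hm, lint_succ' μ n (f := fun g => f (tr g)) (hf.comp hm)]
    refine lintegral_congr fun g => ?_
    rw [lintegral_map (by fun_prop) hm]
    simp [tr_mul]

/-- moments -/
def Mo (μ : Measure SL2) (ε : ℝ) : ENNReal := ∫⁻ g, ENNReal.ofReal (opNorm g ^ ε) ∂μ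

lemma continuous_opNorm_rpow (ε : ℝ) : Continuous fun g => opNorm g ^ ε :=
  continuous_opNorm.rpow_const fun g => Or.inl (opNorm_pos g).ne'

lemma Mo_mono (μ : Measure SL2) {ε ε' : ℝ} (h : ε ≤ ε') : Mo μ ε ≤ Mo μ ε' := by
  refine lintegral_mono fun g => ENNReal.ofReal_le_ofReal ?_
  exact Real.rpow_le_rpow_of_exponent_le (one_le_opNorm g) h

lemma one_le_Mo (μ : Measure SL2) [IsProbabilityMeasure μ] {ε : ℝ} (h : 0 ≤ ε) : 1 ≤ Mo μ ε := by
  calc (1 : ENNReal) = ∫⁻ _, 1 ∂μ := by simp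
    _ ≤ _ := lintegral_mono fun g => by
      simpa using ENNReal.ofReal_le_ofReal (Real.one_le_rpow (one_le_opNorm g) h)

lemma Mo_cpow (μ : Measure SL2) [IsProbabilityMeasure μ] {ε : ℝ} (h : 0 ≤ ε) (n : ℕ) :
    Mo (cpow μ n) ε ≤ Mo μ ε ^ n := by
  have hm : Measurable fun g => ENNReal.ofReal (opNorm g ^ ε) :=
    (continuous_opNorm_rpow ε).measurable.ennreal_ofReal
  induction n with
  | zero => simp [Mo, cpow, lintegral_dirac' _ hm, opNorm_one]
  | succ n ih =>
    rw [Mo, lint_succ μ n hm, pow_succ, mul_comm]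
    calc _ ≤ ∫⁻ g, ENNReal.ofReal (opNorm g ^ ε) * Mo μ ε ^ n ∂μ := by
          refine lintegral_mono fun g => ?_
          calc _ ≤ ∫⁻ h, ENNReal.ofReal (opNorm g ^ ε) * ENNReal.ofReal (opNorm h ^ ε)
                ∂(cpow μ n) := by
                refine lintegral_mono fun h' => ?_
                rw [← ENNReal.ofReal_mul (by have := opNorm_nonneg g; positivity),
                  ← Real.mul_rpow (opNorm_nonneg g) (opNorm_nonneg h')]
                exact ENNReal.ofReal_le_ofReal (Real.rpow_le_rpow (opNorm_nonneg _)
                  (opNorm_mul_le g h') h)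
            _ = _ := lintegral_const_mul _ hm
            _ ≤ _ := by gcongr; exact ih
      _ = _ := lintegral_mul_const _ hm

lemma kappa_le_rpow (g : SL2) {ε : ℝ} (h : 0 < ε) : kappa g ≤ opNorm g ^ ε / ε :=
  Real.log_le_rpow_div (opNorm_nonneg g) h

lemma integrable_rpow (μ : Measure SL2) {ε : ℝ} (hM : Mo μ ε < ⊤) :
    Integrable (fun g => opNorm g ^ ε) μ := by
  refine ⟨(continuous_opNorm_rpow ε).aestronglyMeasurable, ?_⟩
  rw [hasFiniteIntegral_iff_ofReal (ae_of_all _ fun g => Real.rpow_nonneg (opNorm_nonneg g) _)]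
  exact hM

lemma integrable_kappa (μ : Measure SL2) {ε : ℝ} (h : 0 < ε) (hM : Mo μ ε < ⊤) :
    Integrable kappa μ := by
  refine ((integrable_rpow μ hM).div_const ε).mono' continuous_kappa.aestronglyMeasurable ?_
  refine ae_of_all _ fun g => ?_
  rw [Real.norm_eq_abs, abs_of_nonneg (kappa_nonneg g)]
  exact kappa_le_rpow g h

lemma Mo_cpow_lt (μ : Measure SL2) [IsProbabilityMeasure μ] {ε : ℝ} (h : 0 ≤ ε) (hM : Mo μ ε < ⊤)
    (n : ℕ) : Mo (cpow μ n) ε < ⊤ :=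
  (Mo_cpow μ h n).trans_lt (ENNReal.pow_lt_top hM)

lemma Mo_tr (μ : Measure SL2) (ε : ℝ) : Mo (μ.map tr) ε = Mo μ ε := by
  rw [Mo, lintegral_map (continuous_opNorm_rpow ε).measurable.ennreal_ofReal
    continuous_tr.measurable]
  simp [opNorm_tr, Mo]

end RW

namespace RW

/-! ### Solvability criteria -/

lemma solvable_of_commute {S : Set SL2} (h : ∀ g ∈ S, ∀ k ∈ S, g * k = k * g) :
    IsSolvable (Subgroup.closure S) := by
  letI : CommGroup (Subgroup.closure S) := Subgroup.closureCommGroupOfComm h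
  exact Group.isSolvable_of_comm fun a b => mul_comm a b

lemma solvable_of_two_step {S : Set SL2} (B U : Subgroup SL2) (hS : S ⊆ B)
    (hBU : ∀ g ∈ B, ∀ h ∈ B, g * h * g⁻¹ * h⁻¹ ∈ U)
    (hU : ∀ g ∈ U, ∀ h ∈ U, g * h = h * g) : IsSolvable (Subgroup.closure S) := by
  have hG : Subgroup.closure S ≤ B := (Subgroup.closure_le B).2 hS
  have h1 : derivedSeries (Subgroup.closure S) 1 ≤ U.comap (Subgroup.closure S).subtype := by
    rw [derivedSeries_succ]
    refine Subgroup.commutator_le.2 fun g _ h _ => ?_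
    rw [Subgroup.mem_comap]
    exact hBU _ (hG g.2) _ (hG h.2)
  refine ⟨2, ?_⟩
  rw [eq_bot_iff, derivedSeries_succ]
  refine Subgroup.commutator_le.2 fun g hg h hh => ?_
  rw [Subgroup.mem_bot, commutatorElement_eq_one_iff_mul_comm]
  exact Subtype.ext (hU _ (h1 hg) _ (h1 hh))

lemma ext_of_two {g h : SL2} {y w : E2} (hyw : dt y w ≠ 0) (h1 : T g y = T h y)
    (h2 : T g w = T h w) : g = h := by
  have key : ∀ z : E2, T g z = T h z := by
    intro z
    have hlin : dt y w • z = dt z w • y - dt z y • w := by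
      ext i
      fin_cases i <;> simp [dt] <;> ring
    have : dt y w • T g z = dt y w • T h z := by
      rw [← map_smul, ← map_smul, hlin, map_sub, map_sub, map_smul, map_smul, map_smul, map_smul,
        h1, h2]
    exact smul_right_injective _ hyw this
  have : T g = T h := ContinuousLinearMap.ext key
  apply Subtype.ext
  exact (Matrix.toEuclideanCLM (𝕜 := ℝ) (n := Fin 2)).injective this

lemma dt_smul_left (a : ℝ) (v w : E2) : dt (a • v) w = a * dt v w := by
  simp [dt]; ring

lemma dt_smul_right (a : ℝ) (v w : E2) : dt v (a • w) = a * dt v w := by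
  simp [dt]; ring

lemma dt_self (v : E2) : dt v v = 0 := by simp [dt]; ring

lemma dt_swap (v w : E2) : dt v w = - dt w v := by simp [dt]; ring

lemma dt_sub_right (v w z : E2) : dt v (w - z) = dt v w - dt v z := by
  simp [dt]; ring

lemma exists_smul_of_dt {v y : E2} (hy : y ≠ 0) (h : dt v y = 0) : ∃ a : ℝ, v = a • y := by
  have hn : ‖y‖ ^ 2 ≠ 0 := by positivity
  refine ⟨ip v y / ‖y‖ ^ 2, ?_⟩
  have hlin : ‖y‖ ^ 2 • v = ip v y • y := by
    rw [dt] at h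
    rw [norm_sq_eq]
    ext i
    fin_cases i <;> simp [ip]
    · linear_combination (y 1) * h
    · linear_combination (- y 0) * h
  rw [div_eq_inv_mul, mul_smul, ← hlin, smul_smul, inv_mul_cancel₀ hn, one_smul]

lemma T_inv_smul {g : SL2} {y w : E2} {a : ℝ} (hy : y ≠ 0) (h : T g y = a • w) :
    T g⁻¹ w = a⁻¹ • y := by
  have ha : a ≠ 0 := by
    rintro rfl
    have := T_inv_T g y
    rw [h, zero_smul, map_zero] at this
    exact hy this.symm
  have := T_inv_T g y
  rw [h, map_smul] at this
  rw [← this, smul_smul, inv_mul_cancel₀ ha, one_smul]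

lemma solvable_of_line {S : Set SL2} {y : E2} (hy : y ≠ 0) (h : ∀ g ∈ S, dt (T g y) y = 0) :
    IsSolvable (Subgroup.closure S) := by
  let B : Subgroup SL2 :=
    { carrier := {g | ∃ a : ℝ, T g y = a • y}
      one_mem' := ⟨1, by simp [T_one]⟩
      mul_mem' := by
        rintro g k ⟨a, ha⟩ ⟨b, hb⟩
        exact ⟨b * a, by rw [T_mul, hb, map_smul, ha, smul_smul]⟩
      inv_mem' := by
        rintro g ⟨a, ha⟩
        exact ⟨a⁻¹, T_inv_smul hy ha⟩ }
  let U : Subgroup SL2 :=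
    { carrier := {g | T g y = y}
      one_mem' := T_one y
      mul_mem' := by
        intro g k (hg : T g y = y) (hk : T k y = y)
        change T (g * k) y = y
        rw [T_mul, hk, hg]
      inv_mem' := by
        intro g (hg : T g y = y)
        change T g⁻¹ y = y
        have := T_inv_T g y
        rwa [hg] at this }
  refine solvable_of_two_step B U (fun g hg => exists_smul_of_dt hy (h g hg)) ?_ ?_
  · rintro g ⟨a, ha⟩ k ⟨b, hb⟩
    change T _ y = y
    have ha0 : a ≠ 0 := by
      rintro rfl
      have := T_inv_T g y
      rw [ha, zero_smul, map_zero] at this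
      exact hy this.symm
    have hb0 : b ≠ 0 := by
      rintro rfl
      have := T_inv_T k y
      rw [hb, zero_smul, map_zero] at this
      exact hy this.symm
    rw [T_mul, T_mul, T_mul, T_inv_smul hy hb, map_smul, T_inv_smul hy ha, map_smul, map_smul,
      map_smul, map_smul, hb, map_smul, ha, smul_smul, smul_smul, smul_smul]
    have : b⁻¹ * (a⁻¹ * (b * a)) = 1 := by field_simp
    convert one_smul ℝ y using 2
    rw [← this]; ring
  · intro g (hg : T g y = y) k (hk : T k y = y)
    have hdt : dt y (rot y) ≠ 0 := by rw [dt_rot]; positivity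
    have aux : ∀ g : SL2, T g y = y → ∃ b : ℝ, T g (rot y) = rot y + b • y := by
      intro g hg
      have : dt (T g (rot y) - rot y) y = 0 := by
        rw [dt_swap, dt_sub_right]
        nth_rw 1 [← hg]
        rw [dt_T]; ring
      obtain ⟨b, hb⟩ := exists_smul_of_dt hy this
      exact ⟨b, by rw [← hb]; abel⟩
    obtain ⟨b, hb⟩ := aux g hg
    obtain ⟨c, hc⟩ := aux k hk
    refine ext_of_two hdt ?_ ?_
    · rw [T_mul, T_mul, hk, hg, hk]
    · rw [T_mul, T_mul, hb, hc, map_add, map_add, map_smul, map_smul, hb, hc, hg, hk]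
      abel

lemma solvable_of_two_lines {S : Set SL2} {y w : E2} (hyw : dt y w ≠ 0)
    (h : ∀ g ∈ S, (dt (T g y) y = 0 ∧ dt (T g w) w = 0) ∨
      (dt (T g y) w = 0 ∧ dt (T g w) y = 0)) :
    IsSolvable (Subgroup.closure S) := by
  have hy : y ≠ 0 := by rintro rfl; simp [dt] at hyw
  have hw : w ≠ 0 := by rintro rfl; simp [dt] at hyw
  let D : SL2 → Prop := fun g => (∃ a : ℝ, T g y = a • y) ∧ (∃ b : ℝ, T g w = b • w)
  let A : SL2 → Prop := fun g => (∃ a : ℝ, T g y = a • w) ∧ (∃ b : ℝ, T g w = b • y)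
  have DD : ∀ g k, D g → D k → D (g * k) := by
    rintro g k ⟨⟨a, ha⟩, ⟨b, hb⟩⟩ ⟨⟨a', ha'⟩, ⟨b', hb'⟩⟩
    exact ⟨⟨a' * a, by rw [T_mul, ha', map_smul, ha, smul_smul]⟩,
      ⟨b' * b, by rw [T_mul, hb', map_smul, hb, smul_smul]⟩⟩
  have DA : ∀ g k, D g → A k → A (g * k) := by
    rintro g k ⟨⟨a, ha⟩, ⟨b, hb⟩⟩ ⟨⟨a', ha'⟩, ⟨b', hb'⟩⟩
    exact ⟨⟨a' * b, by rw [T_mul, ha', map_smul, hb, smul_smul]⟩,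
      ⟨b' * a, by rw [T_mul, hb', map_smul, ha, smul_smul]⟩⟩
  have AD : ∀ g k, A g → D k → A (g * k) := by
    rintro g k ⟨⟨a, ha⟩, ⟨b, hb⟩⟩ ⟨⟨a', ha'⟩, ⟨b', hb'⟩⟩
    exact ⟨⟨a' * a, by rw [T_mul, ha', map_smul, ha, smul_smul]⟩,
      ⟨b' * b, by rw [T_mul, hb', map_smul, hb, smul_smul]⟩⟩
  have AA : ∀ g k, A g → A k → D (g * k) := by
    rintro g k ⟨⟨a, ha⟩, ⟨b, hb⟩⟩ ⟨⟨a', ha'⟩, ⟨b', hb'⟩⟩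
    exact ⟨⟨a' * b, by rw [T_mul, ha', map_smul, hb, smul_smul]⟩,
      ⟨b' * a, by rw [T_mul, hb', map_smul, ha, smul_smul]⟩⟩
  have Di : ∀ g, D g → D g⁻¹ := by
    rintro g ⟨⟨a, ha⟩, ⟨b, hb⟩⟩
    exact ⟨⟨_, T_inv_smul hy ha⟩, ⟨_, T_inv_smul hw hb⟩⟩
  have Ai : ∀ g, A g → A g⁻¹ := by
    rintro g ⟨⟨a, ha⟩, ⟨b, hb⟩⟩
    exact ⟨⟨_, T_inv_smul hw hb⟩, ⟨_, T_inv_smul hy ha⟩⟩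
  have D1 : D 1 := ⟨⟨1, by simp [T_one]⟩, ⟨1, by simp [T_one]⟩⟩
  let B : Subgroup SL2 :=
    { carrier := {g | D g ∨ A g}
      one_mem' := Or.inl D1
      mul_mem' := by
        rintro g k (hg | hg) (hk | hk)
        · exact Or.inl (DD _ _ hg hk)
        · exact Or.inr (DA _ _ hg hk)
        · exact Or.inr (AD _ _ hg hk)
        · exact Or.inl (AA _ _ hg hk)
      inv_mem' := by
        rintro g (hg | hg)
        · exact Or.inl (Di _ hg)
        · exact Or.inr (Ai _ hg) }
  let U : Subgroup SL2 :=
    { carrier := {g | D g}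
      one_mem' := D1
      mul_mem' := fun hg hk => DD _ _ hg hk
      inv_mem' := fun hg => Di _ hg }
  refine solvable_of_two_step B U ?_ ?_ ?_
  · intro g hg
    rcases h g hg with ⟨h1, h2⟩ | ⟨h1, h2⟩
    · exact Or.inl ⟨exists_smul_of_dt hy h1, exists_smul_of_dt hw h2⟩
    · exact Or.inr ⟨exists_smul_of_dt hw h1, exists_smul_of_dt hy h2⟩
  · rintro g (hg | hg) k (hk | hk)
    · exact DD _ _ (DD _ _ (DD _ _ hg hk) (Di _ hg)) (Di _ hk)
    · exact AA _ _ (AD _ _ (DA _ _ hg hk) (Di _ hg)) (Ai _ hk)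
    · exact DD _ _ (AA _ _ (AD _ _ hg hk) (Ai _ hg)) (Di _ hk)
    · exact AA _ _ (DA _ _ (AA _ _ hg hk) (Ai _ hg)) (Ai _ hk)
  · rintro g ⟨⟨a, ha⟩, ⟨b, hb⟩⟩ k ⟨⟨a', ha'⟩, ⟨b', hb'⟩⟩
    refine ext_of_two hyw ?_ ?_
    · rw [T_mul, T_mul, ha, ha', map_smul, map_smul, ha, ha', smul_smul, smul_smul, mul_comm]
    · rw [T_mul, T_mul, hb, hb', map_smul, map_smul, hb, hb', smul_smul, smul_smul, mul_comm]

/-! ### Bounded semigroups: the extremal ellipse -/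

/-- trace of zᵀ Q z -/
def LL (z : SL2) (Q : ℝ × ℝ × ℝ) : ℝ :=
  Q.1 * (z 0 0 ^ 2 + z 0 1 ^ 2) + 2 * Q.2.1 * (z 0 0 * z 1 0 + z 0 1 * z 1 1)
    + Q.2.2 * (z 1 0 ^ 2 + z 1 1 ^ 2)

/-- gᵀ Q g -/
def qact (g : SL2) (Q : ℝ × ℝ × ℝ) : ℝ × ℝ × ℝ :=
  (Q.1 * g 0 0 ^ 2 + 2 * Q.2.1 * (g 0 0 * g 1 0) + Q.2.2 * g 1 0 ^ 2,
   Q.1 * (g 0 0 * g 0 1) + Q.2.1 * (g 0 0 * g 1 1 + g 0 1 * g 1 0) + Q.2.2 * (g 1 0 * g 1 1),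
   Q.1 * g 0 1 ^ 2 + 2 * Q.2.1 * (g 0 1 * g 1 1) + Q.2.2 * g 1 1 ^ 2)

lemma mul_entry (g h : SL2) (i j : Fin 2) : (g * h) i j = g i 0 * h 0 j + g i 1 * h 1 j := by
  simp [Matrix.mul_apply, Fin.sum_univ_two]

lemma LL_qact (g z : SL2) (Q : ℝ × ℝ × ℝ) : LL z (qact g Q) = LL (g * z) Q := by
  simp only [LL, qact, mul_entry]; ring

/-- positive definite forms of determinant one -/
def PQ : Set (ℝ × ℝ × ℝ) := {Q | 0 ≤ Q.1 ∧ 0 ≤ Q.2.2 ∧ Q.1 * Q.2.2 - Q.2.1 ^ 2 = 1}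

lemma PQ_pos {Q : ℝ × ℝ × ℝ} (h : Q ∈ PQ) : 0 < Q.1 := by
  obtain ⟨h1, h2, h3⟩ := h
  rcases h1.eq_or_lt with h | h
  · rw [← h] at h3; nlinarith [sq_nonneg Q.2.1]
  · exact h

lemma PQ_form {Q : ℝ × ℝ × ℝ} (h : Q ∈ PQ) (s t : ℝ) :
    0 ≤ Q.1 * s ^ 2 + 2 * Q.2.1 * (s * t) + Q.2.2 * t ^ 2 := by
  have hp := PQ_pos h
  obtain ⟨h1, h2, h3⟩ := h
  have : 0 ≤ Q.1 * (Q.1 * s ^ 2 + 2 * Q.2.1 * (s * t) + Q.2.2 * t ^ 2) := by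
    have e : Q.1 * (Q.1 * s ^ 2 + 2 * Q.2.1 * (s * t) + Q.2.2 * t ^ 2) =
      (Q.1 * s + Q.2.1 * t) ^ 2 + t ^ 2 := by linear_combination t ^ 2 * h3
    rw [e]; positivity
  exact nonneg_of_mul_nonneg_right this hp

lemma qact_mem {Q : ℝ × ℝ × ℝ} (h : Q ∈ PQ) (g : SL2) : qact g Q ∈ PQ := by
  refine ⟨?_, ?_, ?_⟩
  · exact PQ_form h _ _
  · exact PQ_form h _ _
  · have h3 := h.2.2
    have hd := det_eq g
    simp only [qact]
    have : (g 0 0 * g 1 1 - g 0 1 * g 1 0) ^ 2 * (Q.1 * Q.2.2 - Q.2.1 ^ 2) = 1 := by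
      rw [h3, hd]; ring
    linear_combination this

lemma LL_lower {Q : ℝ × ℝ × ℝ} (h : Q ∈ PQ) (z : SL2) :
    Q.1 + Q.2.2 ≤ (z 0 0 ^ 2 + z 0 1 ^ 2 + z 1 0 ^ 2 + z 1 1 ^ 2) * LL z Q := by
  have hd := det_eq z
  set m := z 0 0 ^ 2 + z 0 1 ^ 2 with hm
  set k := z 0 0 * z 1 0 + z 0 1 * z 1 1 with hk
  set l := z 1 0 ^ 2 + z 1 1 ^ 2 with hl
  have hmk : m * l - k ^ 2 = 1 := by
    have : (z 0 0 * z 1 1 - z 0 1 * z 1 0) ^ 2 = 1 := by rw [hd]; ring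
    rw [hm, hk, hl]; linear_combination this
  have h1 := PQ_form h m k
  have h2 := PQ_form h k l
  have e : (z 0 0 ^ 2 + z 0 1 ^ 2 + z 1 0 ^ 2 + z 1 1 ^ 2) * LL z Q =
      (m + l) * (Q.1 * m + 2 * Q.2.1 * k + Q.2.2 * l) := by
    rw [LL, hm, hk, hl]; ring
  rw [e]
  have : (m + l) * (Q.1 * m + 2 * Q.2.1 * k + Q.2.2 * l) - (Q.1 + Q.2.2) =
      (Q.1 * m ^ 2 + 2 * Q.2.1 * (m * k) + Q.2.2 * k ^ 2) +
      (Q.1 * k ^ 2 + 2 * Q.2.1 * (k * l) + Q.2.2 * l ^ 2) := by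
    linear_combination (Q.1 + Q.2.2) * hmk
  linarith

lemma continuous_LL : Continuous fun p : (ℝ × ℝ × ℝ) × SL2 => LL p.2 p.1 := by
  have h := fun i j => (continuous_entry i j).comp (continuous_snd (X := ℝ × ℝ × ℝ) (Y := SL2))
  have h00 := h 0 0
  have h01 := h 0 1
  have h10 := h 1 0
  have h11 := h 1 1
  simp only [Function.comp_def] at h00 h01 h10 h11
  unfold LL
  fun_prop

lemma commute_of_qact {Q : ℝ × ℝ × ℝ} (hQ : Q ∈ PQ) {g h : SL2} (hg : qact g Q = Q)
    (hh : qact h Q = Q) : g * h = h * g := by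
  have hp := PQ_pos hQ
  obtain ⟨p, q, r⟩ := Q
  have aux : ∀ g : SL2, qact g (p, q, r) = (p, q, r) →
      p * (g 0 0 - g 1 1) = - 2 * q * g 1 0 ∧ p * g 0 1 = - r * g 1 0 := by
    intro g hg
    simp only [qact, Prod.mk.injEq] at hg
    obtain ⟨e1, e2, e3⟩ := hg
    have hd := det_eq g
    constructor
    · linear_combination (g 1 1) * e1 - (g 1 0) * e2 - (p * g 0 0 + q * g 1 0) * hd
    · linear_combination (g 1 1) * e2 - (g 1 0) * e3 - (p * g 0 1 + q * g 1 1) * hd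
  obtain ⟨a1, a2⟩ := aux g hg
  obtain ⟨b1, b2⟩ := aux h hh
  have hp' : p ≠ 0 := hp.ne'
  apply Subtype.ext
  ext i j
  change (g * h) i j = (h * g) i j
  rw [mul_entry, mul_entry]
  fin_cases i <;> fin_cases j <;> simp only [Fin.zero_eta, Fin.mk_one]
  · apply mul_left_cancel₀ hp'
    linear_combination (h 1 0) * a2 - (g 1 0) * b2
  · apply mul_left_cancel₀ (mul_ne_zero hp' hp')
    linear_combination (p * h 0 1) * a1 - (p * g 0 1) * b1 - 2 * q * g 1 0 * b2
      + 2 * q * h 1 0 * a2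
  · apply mul_left_cancel₀ hp'
    linear_combination (g 1 0) * b1 - (h 1 0) * a1
  · apply mul_left_cancel₀ hp'
    linear_combination (-h 1 0) * a2 + (g 1 0) * b2

lemma commute_of_compact {Z S : Set SL2} (hZ : IsCompact Z) (hne : Z.Nonempty)
    (hS : ∀ g ∈ S, ∀ z ∈ Z, g * z ∈ Z) : ∀ g ∈ S, ∀ k ∈ S, g * k = k * g := by
  obtain ⟨z0, hz0⟩ := hne
  let Φ : ℝ × ℝ × ℝ → ℝ := fun Q => sSup ((fun z => LL z Q) '' Z)
  have hΦc : Continuous Φ := hZ.continuous_sSup (f := fun Q z => LL z Q) continuous_LL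
  have hLc : ∀ Q, Continuous fun z => LL z Q := fun Q =>
    continuous_LL.comp (continuous_const.prodMk continuous_id)
  have hle : ∀ Q, ∀ z ∈ Z, LL z Q ≤ Φ Q := fun Q z hz =>
    le_csSup (hZ.bddAbove_image (hLc Q).continuousOn) ⟨z, hz, rfl⟩
  have hatt : ∀ Q, ∃ z ∈ Z, Φ Q = LL z Q := by
    intro Q
    obtain ⟨z, hz, h⟩ := hZ.exists_sSup_image_eq ⟨z0, hz0⟩ (hLc Q).continuousOn
    exact ⟨z, hz, h⟩
  have hI : ((1, 0, 1) : ℝ × ℝ × ℝ) ∈ PQ := by simp [PQ]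
  let K : Set (ℝ × ℝ × ℝ) := {Q | Q ∈ PQ ∧ LL z0 Q ≤ Φ (1, 0, 1)}
  set M := z0 0 0 ^ 2 + z0 0 1 ^ 2 + z0 1 0 ^ 2 + z0 1 1 ^ 2 with hM
  have hM0 : 0 ≤ M := by positivity
  have hKc : IsCompact K := by
    have hcl : IsClosed K := by
      have : K = ({Q | 0 ≤ Q.1} ∩ ({Q | 0 ≤ Q.2.2} ∩ {Q | Q.1 * Q.2.2 - Q.2.1 ^ 2 = 1})) ∩
          {Q | LL z0 Q ≤ Φ (1, 0, 1)} := rfl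
      rw [this]
      refine IsClosed.inter (IsClosed.inter ?_ (IsClosed.inter ?_ ?_)) ?_
      · exact isClosed_le continuous_const (by fun_prop)
      · exact isClosed_le continuous_const (by fun_prop)
      · exact isClosed_eq (by fun_prop) continuous_const
      · exact isClosed_le (continuous_LL.comp (continuous_id.prodMk continuous_const))
          continuous_const
    set R := M * Φ (1, 0, 1)
    refine IsCompact.of_isClosed_subset (isCompact_Icc (a := (-R, -R, -R)) (b := (R, R, R)))
      hcl ?_
    rintro ⟨p, q, r⟩ ⟨hQ, hL⟩
    have h1 := LL_lower hQ z0
    have h2 : p + r ≤ R := h1.trans (mul_le_mul_of_nonneg_left hL hM0)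
    obtain ⟨hp, hr, hd⟩ := hQ
    simp only at hp hr hd
    have hq : |q| ≤ R := by
      apply abs_le_of_sq_le_sq _ (by linarith)
      nlinarith
    rw [abs_le] at hq
    refine ⟨⟨?_, ?_, ?_⟩, ⟨?_, ?_, ?_⟩⟩ <;> simp only <;> linarith
  obtain ⟨Q0, hQ0K, hmin⟩ := hKc.exists_isMinOn ⟨(1, 0, 1), hI, hle _ z0 hz0⟩ hΦc.continuousOn
  have hQ0 : Q0 ∈ PQ := hQ0K.1
  have hglob : ∀ Q ∈ PQ, Φ Q0 ≤ Φ Q := by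
    intro Q hQ
    by_cases h : LL z0 Q ≤ Φ (1, 0, 1)
    · exact hmin ⟨hQ, h⟩
    · have h1 : Φ Q0 ≤ Φ (1, 0, 1) := hmin ⟨hI, hle _ z0 hz0⟩
      have h2 := hle Q z0 hz0
      linarith [not_le.1 h]
  have hm0 : 0 < Φ Q0 := by
    have h1 := LL_lower hQ0 z0
    have h2 := hle Q0 z0 hz0
    have h3 := PQ_pos hQ0
    have h4 := hQ0.2.1
    by_contra hneg
    have : M * LL z0 Q0 ≤ 0 := mul_nonpos_of_nonneg_of_nonpos hM0 (by linarith)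
    linarith
  have huniq : ∀ Q ∈ PQ, Φ Q ≤ Φ Q0 → Q = Q0 := by
    intro Q hQ hle2
    have hp1 := PQ_pos hQ
    have hp2 := PQ_pos hQ0
    obtain ⟨p1, q1, r1⟩ := Q
    obtain ⟨p2, q2, r2⟩ := Q0
    obtain ⟨-, hr1, hd1⟩ := hQ
    obtain ⟨-, hr2, hd2⟩ := hQ0
    simp only at hp1 hp2 hr1 hr2 hd1 hd2
    set δ := (p1 + p2) / 2 * ((r1 + r2) / 2) - ((q1 + q2) / 2) ^ 2 with hδ
    have key : 4 * (p1 * p2) * (δ - 1) = (p1 - p2) ^ 2 + (p1 * q2 - p2 * q1) ^ 2 := by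
      rw [hδ]
      linear_combination (p1 * p2 + p2 ^ 2) * hd1 + (p1 * p2 + p1 ^ 2) * hd2
    by_cases hδ1 : δ ≤ 1
    · have h0 : 4 * (p1 * p2) * (δ - 1) ≤ 0 :=
        mul_nonpos_of_nonneg_of_nonpos (by positivity) (by linarith)
      have e1 : p1 = p2 := by nlinarith [sq_nonneg (p1 - p2), sq_nonneg (p1 * q2 - p2 * q1)]
      subst e1
      have e2 : q1 = q2 := by
        have : p1 * q2 - p1 * q1 = 0 := by nlinarith [sq_nonneg (p1 * q2 - p1 * q1)]
        have : p1 * (q2 - q1) = 0 := by linarith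
        rcases mul_eq_zero.1 this with h | h <;> linarith
      subst e2
      have e3 : r1 = r2 := by
        apply mul_left_cancel₀ hp1.ne'
        linarith
      rw [e3]
    · exfalso
      have hδ1 : 1 < δ := not_le.1 hδ1
      have hs : 1 < √δ := by rw [Real.lt_sqrt (by norm_num)]; simpa using hδ1
      have hs2 : √δ * √δ = δ := Real.mul_self_sqrt (by linarith)
      have hs0 : 0 < √δ := by linarith
      set Q' : ℝ × ℝ × ℝ := ((p1 + p2) / 2 / √δ, (q1 + q2) / 2 / √δ, (r1 + r2) / 2 / √δ) with hQ'
      have hQ'P : Q' ∈ PQ := by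
        refine ⟨by simp only [hQ']; positivity, by simp only [hQ']; positivity, ?_⟩
        simp only [hQ']
        have : (p1 + p2) / 2 / √δ * ((r1 + r2) / 2 / √δ) - ((q1 + q2) / 2 / √δ) ^ 2 =
          δ / (√δ * √δ) := by rw [hδ]; field_simp
        rw [this, hs2, div_self (by linarith)]
      obtain ⟨z, hz, hzeq⟩ := hatt Q'
      have h1 := hglob Q' hQ'P
      have h2 := hle (p1, q1, r1) z hz
      have h3 := hle (p2, q2, r2) z hz
      have h4 : LL z Q' = (LL z (p1, q1, r1) + LL z (p2, q2, r2)) / 2 / √δ := by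
        simp only [LL, hQ']; ring
      have h5 : (LL z (p1, q1, r1) + LL z (p2, q2, r2)) / 2 ≤ Φ (p2, q2, r2) := by linarith
      rw [hzeq, h4, le_div_iff₀ hs0] at h1
      nlinarith
  have hfix : ∀ g ∈ S, qact g Q0 = Q0 := by
    intro g hg
    refine huniq _ (qact_mem hQ0 g) ?_
    obtain ⟨z, hz, hzeq⟩ := hatt (qact g Q0)
    rw [hzeq, LL_qact]
    exact hle _ _ (hS g hg z hz)
  intro g hg k hk
  exact commute_of_qact hQ0 (hfix g hg) (hfix k hk)

end RW

namespace RW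

/-! ### Expected Cartan projection is unbounded -/

lemma measSupp_subset {μ : Measure SL2} {F : Set SL2} (hF : IsClosed F) (h : ∀ᵐ g ∂μ, g ∈ F) :
    measSupp μ ⊆ F := by
  intro g hg
  by_contra hgF
  have := hg Fᶜ hF.isOpen_compl hgF
  rw [ae_iff] at h
  exact this.ne' h

def Fk (μ : Measure SL2) (n : ℕ) (x : SL2) : ENNReal :=
  ∫⁻ g, ENNReal.ofReal (kappa (g * x)) ∂(cpow μ n)

lemma meas_kappa_mul (x : SL2) : Measurable fun g => ENNReal.ofReal (kappa (g * x)) :=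
  (continuous_kappa.comp (continuous_mul_const x)).measurable.ennreal_ofReal

lemma Fk_lip (μ : Measure SL2) [IsProbabilityMeasure μ] (n : ℕ) (x y : SL2) :
    Fk μ n x ≤ Fk μ n y + ENNReal.ofReal (kappa (y⁻¹ * x)) := by
  calc Fk μ n x ≤ ∫⁻ g, (ENNReal.ofReal (kappa (g * y)) + ENNReal.ofReal (kappa (y⁻¹ * x)))
        ∂(cpow μ n) := by
        refine lintegral_mono fun g => ?_
        rw [← ENNReal.ofReal_add (kappa_nonneg _) (kappa_nonneg _)]
        refine ENNReal.ofReal_le_ofReal ?_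
        have := kappa_mul_le (g * y) (y⁻¹ * x)
        rwa [show g * y * (y⁻¹ * x) = g * x by group] at this
    _ = _ := by
        rw [lintegral_add_right _ measurable_const]
        simp [Fk]

lemma kappa_le_Fk (μ : Measure SL2) [IsProbabilityMeasure μ] (n : ℕ) (x : SL2) :
    ENNReal.ofReal (kappa x) ≤ Fk μ n 1 + Fk μ n x := by
  rw [Fk, Fk, ← lintegral_add_left (meas_kappa_mul 1)]
  calc ENNReal.ofReal (kappa x) = ∫⁻ _, ENNReal.ofReal (kappa x) ∂(cpow μ n) := by simp
    _ ≤ _ := by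
      refine lintegral_mono fun g => ?_
      rw [← ENNReal.ofReal_add (kappa_nonneg _) (kappa_nonneg _)]
      refine ENNReal.ofReal_le_ofReal ?_
      have := kappa_mul_le g⁻¹ (g * x)
      rw [kappa_inv, inv_mul_cancel_left] at this
      rwa [mul_one]

lemma Fk_succ (μ : Measure SL2) [IsProbabilityMeasure μ] (n : ℕ) (x : SL2) :
    Fk μ (n + 1) x = ∫⁻ h, Fk μ n (h * x) ∂μ := by
  rw [Fk, lint_succ' μ n (meas_kappa_mul x)]
  simp only [Fk, mul_assoc]

lemma measurable_Fk (μ : Measure SL2) [IsProbabilityMeasure μ] (n : ℕ) : Measurable (Fk μ n) := by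
  have : Measurable fun p : SL2 × SL2 => ENNReal.ofReal (kappa (p.2 * p.1)) :=
    (continuous_kappa.measurable.comp
      (measurable_snd.mul measurable_fst)).ennreal_ofReal
  exact this.lintegral_prod_right

def Dk (μ : Measure SL2) (x : SL2) : ENNReal := liminf (fun n => Fk μ n x) atTop

lemma Dk_lip (μ : Measure SL2) [IsProbabilityMeasure μ] (x y : SL2) :
    Dk μ x ≤ Dk μ y + ENNReal.ofReal (kappa (y⁻¹ * x)) := by
  unfold Dk
  set c := ENNReal.ofReal (kappa (y⁻¹ * x))
  have h1 : liminf (fun n => Fk μ n x) atTop ≤ liminf (fun n => Fk μ n y + c) atTop :=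
    liminf_le_liminf (Eventually.of_forall fun n => Fk_lip μ n x y)
  refine h1.trans (le_of_eq ?_)
  exact liminf_add_const atTop _ c (by isBoundedDefault) (by isBoundedDefault)

lemma exists_kappa_large (μ : Measure SL2) [IsProbabilityMeasure μ] (hzd : ZariskiDense μ)
    (C : ℝ) : ∃ n, ENNReal.ofReal C < ∫⁻ g, ENNReal.ofReal (kappa g) ∂(cpow μ n) := by
  by_contra! hcon
  have hF : ∀ n, Fk μ n 1 ≤ ENNReal.ofReal C := by
    intro n; simpa [Fk] using hcon n
  have hD1 : Dk μ 1 ≤ ENNReal.ofReal C := by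
    refine liminf_le_of_le (by isBoundedDefault) fun b hb => ?_
    obtain ⟨n, hn⟩ := hb.exists
    exact hn.trans (hF n)
  have hDtop : ∀ x, Dk μ x ≠ ⊤ := fun x =>
    ((Dk_lip μ x 1).trans_lt (ENNReal.add_lt_top.2
      ⟨hD1.trans_lt ENNReal.ofReal_lt_top, ENNReal.ofReal_lt_top⟩)).ne
  have hDlow : ∀ x, ENNReal.ofReal (kappa x) ≤ ENNReal.ofReal C + Dk μ x := by
    intro x
    have : ENNReal.ofReal (kappa x) ≤ liminf (fun n => ENNReal.ofReal C + Fk μ n x) atTop :=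
      le_liminf_of_le (by isBoundedDefault) (Eventually.of_forall fun n =>
        (kappa_le_Fk μ n x).trans (by gcongr; exact hF n))
    refine this.trans (le_of_eq ?_)
    exact liminf_const_add atTop _ _ (by isBoundedDefault) (by isBoundedDefault)
  set d : SL2 → ℝ := fun x => (Dk μ x).toReal with hd
  have hlip : ∀ x y, d x ≤ d y + kappa (y⁻¹ * x) := by
    intro x y
    have h := ENNReal.toReal_mono (by simp [hDtop]) (Dk_lip μ x y)
    rwa [ENNReal.toReal_add (hDtop y) ENNReal.ofReal_ne_top,
      ENNReal.toReal_ofReal (kappa_nonneg _)] at h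
  have hcont : Continuous d := by
    rw [continuous_iff_continuousAt]
    intro y
    have hk : Tendsto (fun x => kappa (y⁻¹ * x)) (nhds y) (nhds 0) := by
      have := (continuous_kappa.comp (continuous_const_mul y⁻¹)).tendsto y
      simpa [kappa_one, Function.comp_def] using this
    refine tendsto_iff_dist_tendsto_zero.2 (squeeze_zero (fun _ => dist_nonneg) (fun x => ?_) hk)
    rw [Real.dist_eq, abs_le]
    have h1 := hlip x y
    have h2 := hlip y x
    rw [← kappa_inv (x⁻¹ * y), mul_inv_rev, inv_inv] at h2
    constructor <;> linarith
  have hmeasD : Measurable (Dk μ) := Measurable.liminf fun n => measurable_Fk μ n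
  have hC0 : 0 ≤ max C 0 := le_max_right _ _
  have hd1 : d 1 ≤ max C 0 := by
    have := ENNReal.toReal_mono ENNReal.ofReal_ne_top hD1
    rwa [ENNReal.toReal_ofReal'] at this
  have hdlow : ∀ x, kappa x ≤ max C 0 + d x := by
    intro x
    have := ENNReal.toReal_mono (by simp [hDtop]) (hDlow x)
    rwa [ENNReal.toReal_add ENNReal.ofReal_ne_top (hDtop x),
      ENNReal.toReal_ofReal (kappa_nonneg _), ENNReal.toReal_ofReal'] at this
  have hsub : ∀ x, d x ≤ d 1 → kappa x ≤ 2 * max C 0 := fun x hx => by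
    have := hdlow x; linarith
  have hK := isCompact_kappa_le (2 * max C 0)
  obtain ⟨z, hz, hmin⟩ := hK.exists_isMinOn ⟨1, by simp [kappa_one]⟩ hcont.continuousOn
  have hmin' : ∀ x, d z ≤ d x := by
    intro x
    by_cases hx : kappa x ≤ 2 * max C 0
    · exact hmin hx
    · have h1 : d z ≤ d 1 := hmin (show kappa 1 ≤ 2 * max C 0 by simp [kappa_one])
      by_contra hlt
      exact hx (hsub x (by linarith))
  set Z : Set SL2 := {x | d x = d z} with hZ
  have hZcl : IsClosed Z := isClosed_eq hcont continuous_const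
  have hZcomp : IsCompact Z := by
    have hsubZ : ∀ x ∈ Z, kappa x ≤ 2 * max C 0 := by
      intro x hx
      apply hsub
      have : d x = d z := hx
      rw [this]; exact hmin' 1
    exact hK.of_isClosed_subset hZcl hsubZ
  have hinv : ∀ g ∈ measSupp μ, ∀ x ∈ Z, g * x ∈ Z := by
    intro g hg x hx
    have hcl : IsClosed ((fun g => g * x) ⁻¹' Z) := hZcl.preimage (continuous_mul_const x)
    suffices hae : ∀ᵐ h ∂μ, h ∈ ((fun g => g * x) ⁻¹' Z) by
      have := measSupp_subset hcl hae hg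
      rwa [Set.mem_preimage] at this
    have hxz : d x = d z := hx
    have hge : ∀ h, Dk μ x ≤ Dk μ (h * x) := by
      intro h
      rw [← ENNReal.toReal_le_toReal (hDtop _) (hDtop _)]
      exact hxz.le.trans (hmin' _)
    have hle : ∫⁻ h, Dk μ (h * x) ∂μ ≤ ∫⁻ _, Dk μ x ∂μ := by
      have h1 : ∫⁻ h, Dk μ (h * x) ∂μ ≤ liminf (fun n => ∫⁻ h, Fk μ n (h * x) ∂μ) atTop :=
        lintegral_liminf_le fun n => (measurable_Fk μ n).comp (measurable_mul_const x)
      refine h1.trans ?_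
      simp only [← Fk_succ]
      rw [liminf_nat_add (fun n => Fk μ n x) 1]
      simp [Dk]
    have := ae_eq_of_ae_le_of_lintegral_le (μ := μ) (f := fun _ => Dk μ x)
      (g := fun h => Dk μ (h * x)) (ae_of_all _ hge) (by simp [hDtop])
      (hmeasD.comp (measurable_mul_const x)).aemeasurable hle
    filter_upwards [this] with h hh
    rw [Set.mem_preimage]
    show d (h * x) = d z
    rw [← hxz, hd]
    exact congrArg ENNReal.toReal hh.symm
  exact hzd (solvable_of_commute (commute_of_compact hZcomp ⟨z, rfl⟩ hinv))

end RW

namespace RW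

/-! ### Action on the unit circle -/

abbrev SS := Metric.sphere (0 : E2) 1

lemma norm_SS (u : SS) : ‖(u : E2)‖ = 1 := by
  have := u.2
  rwa [mem_sphere_zero_iff_norm] at this

lemma normT_SS_pos (g : SL2) (u : SS) : 0 < ‖T g u‖ := norm_T_pos g (by rw [norm_SS]; exact one_pos)

def sa (g : SL2) (u : SS) : SS := ⟨‖T g u‖⁻¹ • T g u, by
  rw [mem_sphere_zero_iff_norm, norm_smul, norm_inv, norm_norm,
    inv_mul_cancel₀ (normT_SS_pos g u).ne']⟩

lemma sa_coe (g : SL2) (u : SS) : (sa g u : E2) = ‖T g u‖⁻¹ • T g u := rfl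

lemma continuous_T_SS : Continuous fun p : SL2 × SS => T p.1 (p.2 : E2) := by
  have := continuous_T
  fun_prop

lemma continuous_sa : Continuous fun p : SL2 × SS => sa p.1 p.2 := by
  refine Continuous.subtype_mk ?_ _
  have h1 : Continuous fun p : SL2 × SS => ‖T p.1 (p.2 : E2)‖⁻¹ :=
    (continuous_T_SS.norm).inv₀ fun p => (normT_SS_pos p.1 p.2).ne'
  exact h1.smul continuous_T_SS

lemma sa_mul (g h : SL2) (u : SS) : sa (g * h) u = sa g (sa h u) := by
  apply Subtype.ext
  have h1 := normT_SS_pos h u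
  rw [sa_coe, sa_coe, sa_coe, map_smul, T_mul, norm_smul, norm_inv, norm_norm, smul_smul,
    mul_inv, inv_inv]
  congr 1
  field_simp

def lg (g : SL2) (u : SS) : ℝ := Real.log ‖T g u‖

lemma continuous_lg : Continuous fun p : SL2 × SS => lg p.1 p.2 :=
  continuous_T_SS.norm.log fun p => (normT_SS_pos p.1 p.2).ne'

lemma abs_lg_le (g : SL2) (u : SS) : |lg g u| ≤ kappa g := by
  have h1 := norm_T_le g u
  have h2 := le_norm_T g u
  have h0 := normT_SS_pos g u
  rw [norm_SS] at h1 h2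
  rw [abs_le]
  constructor
  · have := Real.log_le_log one_pos h2
    rw [Real.log_mul (opNorm_pos g).ne' h0.ne', Real.log_one] at this
    unfold kappa lg; linarith
  · rw [mul_one] at h1
    exact Real.log_le_log h0 h1

lemma lg_mul (g h : SL2) (u : SS) : lg (g * h) u = lg g (sa h u) + lg h u := by
  have h1 := normT_SS_pos h u
  have h2 := normT_SS_pos (g * h) u
  unfold lg
  rw [T_mul] at *
  rw [sa_coe, map_smul, norm_smul, norm_inv, norm_norm,
    Real.log_mul (inv_pos.2 h1).ne' h2.ne', Real.log_inv]
  ring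

lemma measurable_lg (u : SS) : Measurable fun g => lg g u :=
  (continuous_lg.comp (Continuous.prodMk_left u)).measurable

lemma measurable_sa (u : SS) : Measurable fun g => sa g u :=
  (continuous_sa.comp (Continuous.prodMk_left u)).measurable

lemma integrable_lg {ρ : Measure SL2} (hk : Integrable kappa ρ) (u : SS) :
    Integrable (fun g => lg g u) ρ :=
  hk.mono' (measurable_lg u).aestronglyMeasurable (ae_of_all _ fun g => abs_lg_le g u)

lemma continuous_lg_right (g : SL2) : Continuous fun u : SS => lg g u := by
  have h : Continuous fun u : SS => ((g, u) : SL2 × SS) := by fun_prop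
  have h2 := continuous_lg.comp h
  simp only [Function.comp_def] at h2
  exact h2

lemma continuous_sa_right (g : SL2) : Continuous fun u : SS => sa g u := by
  have h : Continuous fun u : SS => ((g, u) : SL2 × SS) := by fun_prop
  have h2 := continuous_sa.comp h
  simp only [Function.comp_def] at h2
  exact h2

def Ig (ρ : Measure SL2) (u : SS) : ℝ := ∫ g, lg g u ∂ρ

lemma continuous_Ig {ρ : Measure SL2} (hk : Integrable kappa ρ) : Continuous (Ig ρ) := by
  refine continuous_of_dominated (F := fun u g => lg g u) (bound := kappa)
    (fun u => (measurable_lg u).aestronglyMeasurable)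
    (fun u => ae_of_all _ fun g => abs_lg_le g u) hk (ae_of_all _ fun g => ?_)
  exact continuous_lg_right g

def Pf (ρ : Measure SL2) (f : SS → ℝ) (u : SS) : ℝ := ∫ g, f (sa g u) ∂ρ

lemma exists_bound {f : SS → ℝ} (hf : Continuous f) : ∃ B, ∀ u, |f u| ≤ B := by
  obtain ⟨B, hB⟩ := isCompact_univ.exists_bound_of_continuousOn hf.continuousOn
  exact ⟨B, fun u => hB u trivial⟩

lemma continuous_Pf (ρ : Measure SL2) [IsProbabilityMeasure ρ] {f : SS → ℝ} (hf : Continuous f) :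
    Continuous (Pf ρ f) := by
  obtain ⟨B, hB⟩ := exists_bound hf
  refine continuous_of_dominated (F := fun u g => f (sa g u)) (bound := fun _ => B)
    (fun u => (hf.measurable.comp (measurable_sa u)).aestronglyMeasurable)
    (fun u => ae_of_all _ fun g => hB _) (integrable_const _) (ae_of_all _ fun g => ?_)
  exact hf.comp (continuous_sa_right g)

lemma Pf_mconv (μ ρ : Measure SL2) [IsProbabilityMeasure μ] [IsProbabilityMeasure ρ] {f : SS → ℝ}
    (hf : Continuous f) (u : SS) : Pf (Measure.mconv μ ρ) f u = Pf ρ (Pf μ f) u := by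
  obtain ⟨B, hB⟩ := exists_bound hf
  have hm : Measurable fun g => f (sa g u) := hf.measurable.comp (measurable_sa u)
  have hi : Integrable (fun g => f (sa g u)) (Measure.mconv μ ρ) :=
    (integrable_const B).mono' hm.aestronglyMeasurable (ae_of_all _ fun g => hB _)
  unfold Pf
  rw [integral_mconv hm hi, integral_integral_swap (integrable_mconv hm hi)]
  simp only [sa_mul]

lemma Ig_mconv {μ ρ : Measure SL2} [IsProbabilityMeasure μ] [IsProbabilityMeasure ρ]
    (h1 : Integrable kappa μ) (h2 : Integrable kappa ρ) (h3 : Integrable kappa (Measure.mconv μ ρ))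
    (u : SS) : Ig (Measure.mconv μ ρ) u = Pf ρ (Ig μ) u + Ig ρ u := by
  unfold Ig
  have hi := integrable_lg h3 u
  rw [integral_mconv (measurable_lg u) hi,
    integral_integral_swap (integrable_mconv (measurable_lg u) hi)]
  have : ∀ h, ∫ g, lg (g * h) u ∂μ = Ig μ (sa h u) + lg h u := by
    intro h
    simp only [lg_mul]
    rw [integral_add (integrable_lg h1 _) (integrable_const _)]
    simp [Ig]
  simp only [this]
  obtain ⟨B, hB⟩ := exists_bound (continuous_Ig h1)
  rw [integral_add _ (integrable_lg h2 u)]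
  · rfl
  · exact (integrable_const B).mono'
      ((continuous_Ig h1).measurable.comp (measurable_sa u)).aestronglyMeasurable
      (ae_of_all _ fun g => hB _)

/-- Stationary measure on the circle. -/
def Stat (μ : Measure SL2) (ν : Measure SS) : Prop :=
  (μ.prod ν).map (fun p => sa p.1 p.2) = ν

lemma stat_of_integral {μ : Measure SL2} [IsProbabilityMeasure μ] {ν : Measure SS}
    [IsProbabilityMeasure ν] (h : ∀ f : SS → ℝ, Continuous f → ∫ u, Pf μ f u ∂ν = ∫ u, f u ∂ν) :
    Stat μ ν := by
  have hm : Measurable fun p : SL2 × SS => sa p.1 p.2 := continuous_sa.measurable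
  have : IsProbabilityMeasure ((μ.prod ν).map (fun p => sa p.1 p.2)) :=
    Measure.isProbabilityMeasure_map hm.aemeasurable
  refine ext_of_forall_integral_eq_of_IsFiniteMeasure fun f => ?_
  obtain ⟨B, hB⟩ := exists_bound f.continuous
  rw [integral_map hm.aemeasurable f.continuous.measurable.aestronglyMeasurable,
    integral_prod_symm, ← h f f.continuous]
  · rfl
  · exact (integrable_const B).mono' (f.continuous.measurable.comp hm).aestronglyMeasurable
      (ae_of_all _ fun g => hB _)

/-- Existence of a stationary measure with non-positive drift. -/
lemma exists_stat (μ : Measure SL2) [IsProbabilityMeasure μ]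
    (hk : ∀ n, Integrable kappa (cpow μ n)) (v : ℕ → SS) (hv : ∀ n, Ig (cpow μ n) (v n) ≤ 0) :
    ∃ ν : Measure SS, IsProbabilityMeasure ν ∧ Stat μ ν ∧ ∫ u, Ig μ u ∂ν ≤ 0 := by
  have hk1 : Integrable kappa μ := by simpa [cpow_one] using hk 1
  let m : ℕ → SS → Measure SS := fun j u => (cpow μ j).map (fun g => sa g u)
  have hmp : ∀ j u, IsProbabilityMeasure (m j u) := fun j u =>
    Measure.isProbabilityMeasure_map (measurable_sa u).aemeasurable
  let M : ℕ → Measure SS := fun n =>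
    ((n + 1 : ℕ) : ENNReal)⁻¹ • ∑ j ∈ Finset.range (n + 1), m j (v (n + 1))
  have hMp : ∀ n, IsProbabilityMeasure (M n) := by
    intro n
    constructor
    simp only [M, Measure.smul_apply, Measure.coe_finsetSum, Finset.sum_apply, measure_univ,
      Finset.sum_const, Finset.card_range, smul_eq_mul, nsmul_eq_mul, mul_one]
    exact ENNReal.inv_mul_cancel (by simp) (by simp)
  have hMint : ∀ n (f : SS → ℝ), Continuous f → ∫ u, f u ∂(M n) =
      ((n : ℝ) + 1)⁻¹ * ∑ j ∈ Finset.range (n + 1), Pf (cpow μ j) f (v (n + 1)) := by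
    intro n f hf
    obtain ⟨B, hB⟩ := exists_bound hf
    simp only [M]
    rw [integral_smul_measure, integral_finsetSum_measure]
    · rw [smul_eq_mul]
      congr 1
      · simp
        norm_cast
      · refine Finset.sum_congr rfl fun j _ => ?_
        rw [integral_map (measurable_sa _).aemeasurable hf.measurable.aestronglyMeasurable]
        rfl
    · intro j _
      exact (integrable_const B).mono' hf.measurable.aestronglyMeasurable
        (ae_of_all _ fun g => hB _)
  let W : ℕ → ProbabilityMeasure SS := fun n => ⟨M n, hMp n⟩
  let U : Ultrafilter (ProbabilityMeasure SS) := (hyperfilter ℕ).map W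
  obtain ⟨ν, -, hν⟩ := isCompact_univ.ultrafilter_le_nhds U (by simp)
  have hT : Tendsto W (hyperfilter ℕ : Filter ℕ) (nhds ν) := hν
  have hat : (hyperfilter ℕ : Filter ℕ) ≤ atTop := by
    rw [← Nat.cofinite_eq_atTop]; exact hyperfilter_le_cofinite
  rw [ProbabilityMeasure.tendsto_iff_forall_integral_tendsto] at hT
  have hT' : ∀ f : SS → ℝ, Continuous f → Tendsto (fun n => ∫ u, f u ∂(M n))
      (hyperfilter ℕ : Filter ℕ) (nhds (∫ u, f u ∂(ν : Measure SS))) := fun f hf =>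
    hT (BoundedContinuousFunction.mkOfCompact ⟨f, hf⟩)
  refine ⟨ν, inferInstance, stat_of_integral fun f hf => ?_, ?_⟩
  · have h1 := hT' _ (continuous_Pf μ hf)
    have h2 := hT' _ hf
    refine tendsto_nhds_unique (h1.congr' ?_ : Tendsto (fun n => ∫ u, f u ∂(M n) +
      ((n : ℝ) + 1)⁻¹ * (Pf (cpow μ (n + 1)) f (v (n + 1)) - Pf (cpow μ 0) f (v (n + 1)))) _ _) ?_
    · refine Eventually.of_forall fun n => ?_
      beta_reduce
      rw [hMint n _ hf, hMint n _ (continuous_Pf μ hf), ← mul_add]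
      congr 1
      rw [← Finset.sum_range_sub (fun j => Pf (cpow μ j) f (v (n + 1))), ← Finset.sum_add_distrib]
      refine Finset.sum_congr rfl fun j _ => ?_
      rw [show cpow μ (j + 1) = Measure.mconv μ (cpow μ j) from rfl, Pf_mconv _ _ hf]
      ring
    · obtain ⟨B, hB⟩ := exists_bound hf
      have hPB : ∀ j u, |Pf (cpow μ j) f u| ≤ B := by
        intro j u
        have := norm_integral_le_of_norm_le_const (μ := cpow μ j) (f := fun g => f (sa g u))
          (ae_of_all _ fun g => hB _)
        simpa [Pf] using this
      have h0 : Tendsto (fun n : ℕ => ((n : ℝ) + 1)⁻¹ *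
          (Pf (cpow μ (n + 1)) f (v (n + 1)) - Pf (cpow μ 0) f (v (n + 1)))) atTop (nhds 0) := by
        have h3 : Tendsto (fun n : ℕ => ((n : ℝ) + 1)⁻¹ * (2 * B)) atTop (nhds 0) := by
          have := tendsto_one_div_add_atTop_nhds_zero_nat (𝕜 := ℝ)
          simpa using this.mul_const (2 * B)
        refine squeeze_zero_norm (fun n => ?_) h3
        rw [norm_mul, norm_inv, Real.norm_of_nonneg (by positivity : (0 : ℝ) ≤ (n : ℝ) + 1)]
        gcongr
        rw [Real.norm_eq_abs]
        refine (abs_sub _ _).trans ?_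
        have := hPB (n + 1) (v (n + 1))
        have := hPB 0 (v (n + 1))
        linarith
      simpa using h2.add (h0.mono_left hat)
  · have h1 := hT' _ (continuous_Ig hk1)
    refine le_of_tendsto h1 (Eventually.of_forall fun n => ?_)
    rw [hMint n _ (continuous_Ig hk1)]
    have hsum : ∀ n u, ∑ j ∈ Finset.range n, Pf (cpow μ j) (Ig μ) u = Ig (cpow μ n) u := by
      intro n u
      induction n with
      | zero =>
        simp only [Finset.range_zero, Finset.sum_empty, Ig, cpow]
        rw [integral_dirac' _ _ (measurable_lg u).stronglyMeasurable]
        simp [lg, T_one]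
      | succ n ih =>
        rw [Finset.sum_range_succ, ih, show cpow μ (n + 1) = Measure.mconv μ (cpow μ n) from rfl,
          Ig_mconv hk1 (hk n) (hk (n + 1))]
        ring
    rw [hsum]
    exact mul_nonpos_of_nonneg_of_nonpos (by positivity) (hv (n + 1))

lemma stat_Ig {μ : Measure SL2} [IsProbabilityMeasure μ] (hk : ∀ n, Integrable kappa (cpow μ n))
    {ν : Measure SS} [IsProbabilityMeasure ν] (hst : Stat μ ν) (hneg : ∫ u, Ig μ u ∂ν ≤ 0) (n : ℕ) :
    ∫ u, Ig (cpow μ n) u ∂ν ≤ 0 := by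
  have hk1 : Integrable kappa μ := by simpa [cpow_one] using hk 1
  have hm : Measurable fun p : SL2 × SS => sa p.1 p.2 := continuous_sa.measurable
  have hinv : ∀ f : SS → ℝ, Continuous f → ∫ u, Pf μ f u ∂ν = ∫ u, f u ∂ν := by
    intro f hf
    obtain ⟨B, hB⟩ := exists_bound hf
    conv_rhs => rw [← hst]
    rw [integral_map hm.aemeasurable hf.measurable.aestronglyMeasurable, integral_prod_symm]
    · rfl
    · exact (integrable_const B).mono' (hf.measurable.comp hm).aestronglyMeasurable
        (ae_of_all _ fun g => hB _)
  have hintg : ∀ f : SS → ℝ, Continuous f → Integrable f ν := by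
    intro f hf
    obtain ⟨B, hB⟩ := exists_bound hf
    exact (integrable_const B).mono' hf.measurable.aestronglyMeasurable (ae_of_all _ fun g => hB _)
  induction n with
  | zero =>
    have : ∀ u, Ig (cpow μ 0) u = 0 := by
      intro u
      simp only [Ig, cpow]
      rw [integral_dirac' _ _ (measurable_lg u).stronglyMeasurable]
      simp [lg, T_one]
    simp [this]
  | succ n ih =>
    have h3 : cpow μ (n + 1) = Measure.mconv (cpow μ n) μ := by rw [cpow_add, cpow_one]
    have h4 : ∀ u, Ig (cpow μ (n + 1)) u = Pf μ (Ig (cpow μ n)) u + Ig μ u := by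
      intro u
      rw [h3, Ig_mconv (hk n) hk1 (h3 ▸ hk (n + 1))]
    simp only [h4]
    rw [integral_add (hintg _ (continuous_Pf μ (continuous_Ig (hk n)))) (hintg _ (continuous_Ig hk1)),
      hinv _ (continuous_Ig (hk n))]
    linarith

end RW

namespace RW

/-! ### Positivity of the drift -/

/-- Unit vectors parallel to `y`. -/
def Ln (y : SS) : Set SS := {u | dt (u : E2) y = 0}

lemma continuous_dt_left (y : E2) : Continuous fun u : SS => dt (u : E2) y := by
  unfold dt; fun_prop

lemma isClosed_Ln (y : SS) : IsClosed (Ln y) :=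
  isClosed_eq (continuous_dt_left y) continuous_const

lemma SS_ne (y : SS) : (y : E2) ≠ 0 := by
  intro h; have := norm_SS y; rw [h] at this; simp at this

lemma dt_trans {u v w : E2} (hv : v ≠ 0) (h1 : dt u v = 0) (h2 : dt v w = 0) : dt u w = 0 := by
  obtain ⟨a, rfl⟩ := exists_smul_of_dt hv h1
  rw [dt_smul_left, h2, mul_zero]

lemma Ln_disj {y z : SS} (h : dt (y : E2) z ≠ 0) : Disjoint (Ln y) (Ln z) := by
  rw [Set.disjoint_left]
  intro u hu hu'
  have h1 : dt (y : E2) u = 0 := by rw [dt_swap]; simpa using (show dt (u : E2) y = 0 from hu)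
  exact h (dt_trans (SS_ne u) h1 hu')

lemma Ln_eq {y z : SS} (h : dt (y : E2) z = 0) : Ln y = Ln z := by
  have h' : dt (z : E2) y = 0 := by rw [dt_swap, h, neg_zero]
  ext u
  exact ⟨fun hu => dt_trans (SS_ne y) hu h, fun hu => dt_trans (SS_ne z) hu h'⟩

lemma sa_mem_Ln (g : SL2) (u y : SS) : sa g u ∈ Ln y ↔ u ∈ Ln (sa g⁻¹ y) := by
  have h1 := (inv_pos.2 (normT_SS_pos g u)).ne'
  have h2 := (inv_pos.2 (normT_SS_pos g⁻¹ y)).ne'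
  show dt (sa g u : E2) y = 0 ↔ dt (u : E2) (sa g⁻¹ y : E2) = 0
  rw [sa_coe, sa_coe, dt_smul_left, dt_smul_right, mul_eq_zero, mul_eq_zero,
    ← dt_T g u (T g⁻¹ y), T_T_inv]
  tauto

/-- If `y` maximises the atomic mass among lines, so does `g⁻¹ y` almost surely. -/
lemma atom_inv {μ : Measure SL2} [IsProbabilityMeasure μ] {ν : Measure SS} [IsProbabilityMeasure ν]
    (hst : Stat μ ν) (y : SS) (hmax : ∀ z, ν (Ln z) ≤ ν (Ln y)) :
    ∀ᵐ g ∂μ, ν (Ln (sa g⁻¹ y)) = ν (Ln y) := by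
  have hm : Measurable fun p : SL2 × SS => sa p.1 p.2 := continuous_sa.measurable
  have hB := (isClosed_Ln y).measurableSet
  have hpre : ∀ g, (Prod.mk g ⁻¹' ((fun p : SL2 × SS => sa p.1 p.2) ⁻¹' Ln y))
      = Ln (sa g⁻¹ y) := by
    intro g
    ext u
    rw [Set.mem_preimage, Set.mem_preimage]
    exact sa_mem_Ln g u y
  have h1 : ν (Ln y) = ∫⁻ g, ν (Ln (sa g⁻¹ y)) ∂μ := by
    conv_lhs => rw [← hst]
    rw [Measure.map_apply hm hB, Measure.prod_apply (hm hB)]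
    simp only [hpre]
  have hmeas : Measurable fun g => ν (Ln (sa g⁻¹ y)) := by
    have := measurable_measure_prodMk_left (ν := ν) (hm hB)
    simpa only [hpre] using this
  refine ae_eq_of_ae_le_of_lintegral_le (μ := μ) (f := fun g => ν (Ln (sa g⁻¹ y)))
    (g := fun _ => ν (Ln y)) (ae_of_all _ fun g => hmax _) ?_ measurable_const.aemeasurable ?_
  · rw [← h1]; exact measure_ne_top _ _
  · rw [← h1]; simp

lemma dt_sa_inv {g : SL2} {y z : SS} (h : dt (sa g⁻¹ y : E2) z = 0) : dt (T g z) y = 0 := by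
  have h2 := (inv_pos.2 (normT_SS_pos g⁻¹ y)).ne'
  rw [sa_coe, dt_smul_left, mul_eq_zero] at h
  have h3 : dt (T g⁻¹ (y : E2)) z = 0 := by tauto
  rw [← dt_T g, T_T_inv] at h3
  rw [dt_swap, h3, neg_zero]

lemma isClosed_dtT (z y : E2) : IsClosed {g : SL2 | dt (T g z) y = 0} := by
  refine isClosed_eq ?_ continuous_const
  have := continuous_T
  unfold dt
  fun_prop

/-- A stationary measure has no line of mass at least one half. -/
lemma stat_small {μ : Measure SL2} [IsProbabilityMeasure μ] (hzd : ZariskiDense μ)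
    {ν : Measure SS} [IsProbabilityMeasure ν] (hst : Stat μ ν) (y : SS) : ν (Ln y) < 1 / 2 := by
  by_contra! hy
  have hhalf : (1 / 2 : ENNReal) + 1 / 2 = 1 := by
    rw [ENNReal.div_add_div_same, one_add_one_eq_two, ENNReal.div_self (by simp) (by simp)]
  have hms : ∀ z, MeasurableSet (Ln z) := fun z => (isClosed_Ln z).measurableSet
  by_cases hex : ∃ z : SS, dt (y : E2) z ≠ 0 ∧ 1 / 2 ≤ ν (Ln z)
  · obtain ⟨z, hyz, hz⟩ := hex
    have hsum : ν (Ln y) + ν (Ln z) ≤ 1 := by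
      rw [← measure_union (Ln_disj hyz) (hms z)]
      exact prob_le_one
    have hy2 : ν (Ln y) = 1 / 2 := by
      refine le_antisymm ?_ hy
      have : ν (Ln y) + 1 / 2 ≤ 1 / 2 + 1 / 2 := by
        rw [hhalf]; exact le_trans (by gcongr) hsum
      exact (ENNReal.add_le_add_iff_right (by simp)).1 this
    have hz2 : ν (Ln z) = 1 / 2 := by
      refine le_antisymm ?_ hz
      have : 1 / 2 + ν (Ln z) ≤ 1 / 2 + 1 / 2 := by
        rw [hhalf]; exact le_trans (by gcongr) hsum
      exact (ENNReal.add_le_add_iff_left (by simp)).1 this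
    have hother : ∀ w : SS, dt (w : E2) y ≠ 0 → dt (w : E2) z ≠ 0 → ν (Ln w) = 0 := by
      intro w h1 h2
      have h3 : ν (Ln w) + 1 ≤ 0 + 1 := by
        rw [zero_add]
        calc ν (Ln w) + 1 = ν (Ln w) + (ν (Ln y) + ν (Ln z)) := by rw [hy2, hz2, hhalf]
          _ = ν (Ln w ∪ (Ln y ∪ Ln z)) := by
            rw [measure_union _ ((hms y).union (hms z)), measure_union (Ln_disj hyz) (hms z)]
            exact Disjoint.union_right (Ln_disj h1) (Ln_disj h2)
          _ ≤ 1 := prob_le_one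
      have := (ENNReal.add_le_add_iff_right (by simp)).1 h3
      simpa using this
    have hle : ∀ w, ν (Ln w) ≤ 1 / 2 := by
      intro w
      by_cases h1 : dt (w : E2) y = 0
      · rw [Ln_eq h1, hy2]
      by_cases h2 : dt (w : E2) z = 0
      · rw [Ln_eq h2, hz2]
      rw [hother w h1 h2]; simp
    have hkey : ∀ w, ν (Ln w) = 1 / 2 → dt (w : E2) y = 0 ∨ dt (w : E2) z = 0 := by
      intro w hw
      by_contra! hcon
      rw [hother w hcon.1 hcon.2] at hw
      exact (ENNReal.half_pos one_ne_zero).ne hw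
    have hA : ∀ w, ν (Ln w) = 1 / 2 → measSupp μ ⊆
        {g | dt (T g y) w = 0} ∪ {g | dt (T g z) w = 0} := by
      intro w hw
      refine measSupp_subset ((isClosed_dtT _ _).union (isClosed_dtT _ _)) ?_
      filter_upwards [atom_inv hst w fun v => by rw [hw]; exact hle v] with g hg
      rw [hw] at hg
      rcases hkey _ hg with h | h
      · exact Or.inl (dt_sa_inv h)
      · exact Or.inr (dt_sa_inv h)
    have hno : ∀ v : E2, v ≠ 0 → dt v y = 0 → dt v z = 0 → False := by
      intro v hv h1 h2
      apply hyz
      refine dt_trans hv ?_ h2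
      rw [dt_swap, h1, neg_zero]
    have hT0 : ∀ (g : SL2) (w : SS), T g (w : E2) ≠ 0 := fun g w =>
      norm_pos_iff.1 (normT_SS_pos g w)
    refine hzd (solvable_of_two_lines hyz fun g hg => ?_)
    have a1 : dt (T g y) y = 0 ∨ dt (T g z) y = 0 := hA y hy2 hg
    have a2 : dt (T g y) z = 0 ∨ dt (T g z) z = 0 := hA z hz2 hg
    have b1 := hno _ (hT0 g y)
    have b2 := hno _ (hT0 g z)
    tauto
  · push Not at hex
    have hmax : ∀ z, ν (Ln z) ≤ ν (Ln y) := by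
      intro z
      by_cases h : dt (y : E2) z = 0
      · rw [Ln_eq h]
      · exact (hex z h).le.trans hy
    refine hzd (solvable_of_line (SS_ne y) fun g hg => ?_)
    refine measSupp_subset (isClosed_dtT y y) ?_ hg
    filter_upwards [atom_inv hst y hmax] with g hg
    apply dt_sa_inv
    by_contra hne
    have hne' : dt (y : E2) (sa g⁻¹ y) ≠ 0 := by rw [dt_swap]; simpa using hne
    have := hex _ hne'
    rw [hg] at this
    exact absurd hy (not_le.2 this)

/-- Uniform version by compactness. -/
lemma stat_unif {ν : Measure SS} [IsProbabilityMeasure ν] (h : ∀ y, ν (Ln y) < 1 / 2) :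
    ∃ r > (0 : ℝ), ∃ ω < (1 / 2 : ENNReal), ∀ y : SS, ν {u : SS | |dt (u : E2) y| ≤ r} ≤ ω := by
  have key : ∃ r > (0 : ℝ), ∃ ω < (1 / 2 : ENNReal), ∀ y ∈ (Set.univ : Set SS),
      ν {u : SS | |dt (u : E2) y| ≤ r} ≤ ω := by
    refine isCompact_univ.induction_on (p := fun s : Set SS => ∃ r > (0 : ℝ),
      ∃ ω < (1 / 2 : ENNReal), ∀ y ∈ s, ν {u : SS | |dt (u : E2) y| ≤ r} ≤ ω) ?_ ?_ ?_ ?_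
    · exact ⟨1, one_pos, 0, by simp, fun y hy => absurd hy (Set.notMem_empty y)⟩
    · rintro s t hst ⟨r, hr, ω, hω, H⟩
      exact ⟨r, hr, ω, hω, fun y hy => H y (hst hy)⟩
    · rintro s t ⟨r, hr, ω, hω, H⟩ ⟨r', hr', ω', hω', H'⟩
      refine ⟨min r r', lt_min hr hr', max ω ω', max_lt hω hω', ?_⟩
      rintro y (hy | hy)
      · refine le_trans (measure_mono fun u hu => ?_) ((H y hy).trans (le_max_left _ _))
        exact le_trans (show |dt (u : E2) y| ≤ min r r' from hu) (min_le_left _ _)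
      · refine le_trans (measure_mono fun u hu => ?_) ((H' y hy).trans (le_max_right _ _))
        exact le_trans (show |dt (u : E2) y| ≤ min r r' from hu) (min_le_right _ _)
    · intro y _
      have hlim : Tendsto (fun n : ℕ => ν {u : SS | |dt (u : E2) y| ≤ 1 / ((n : ℝ) + 1)}) atTop
          (nhds (ν (⋂ n : ℕ, {u : SS | |dt (u : E2) y| ≤ 1 / ((n : ℝ) + 1)}))) := by
        refine tendsto_measure_iInter_atTop (fun n => ?_) ?_ ⟨0, measure_ne_top _ _⟩
        · exact (isClosed_le (continuous_dt_left y).abs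
            continuous_const).measurableSet.nullMeasurableSet
        · intro m n hmn u hu
          have hu' : |dt (u : E2) y| ≤ 1 / ((n : ℝ) + 1) := hu
          show |dt (u : E2) y| ≤ 1 / ((m : ℝ) + 1)
          refine hu'.trans ?_
          have : (m : ℝ) ≤ n := by exact_mod_cast hmn
          gcongr
      have hInter : (⋂ n : ℕ, {u : SS | |dt (u : E2) y| ≤ 1 / ((n : ℝ) + 1)}) = Ln y := by
        ext u
        rw [Set.mem_iInter]
        constructor
        · intro hu
          have h0 : |dt (u : E2) y| ≤ 0 :=
            ge_of_tendsto' (tendsto_one_div_add_atTop_nhds_zero_nat (𝕜 := ℝ)) hu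
          exact abs_nonpos_iff.1 h0
        · intro hu n
          have hu' : dt (u : E2) y = 0 := hu
          show |dt (u : E2) y| ≤ 1 / ((n : ℝ) + 1)
          rw [hu', abs_zero]; positivity
      rw [hInter] at hlim
      obtain ⟨n, hn⟩ := (hlim.eventually (gt_mem_nhds (h y))).exists
      set δ : ℝ := 1 / ((n : ℝ) + 1) with hδ
      have hδ0 : 0 < δ := by positivity
      refine ⟨Metric.ball y (δ / 2), mem_nhdsWithin_of_mem_nhds (Metric.ball_mem_nhds _ (by positivity)),
        δ / 2, by positivity, _, hn, ?_⟩
      intro z hz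
      refine measure_mono fun u hu => ?_
      have hu' : |dt (u : E2) z| ≤ δ / 2 := hu
      show |dt (u : E2) y| ≤ δ
      have hz' : ‖(z : E2) - y‖ < δ / 2 := by
        rw [← dist_eq_norm]; exact hz
      have h1 := abs_dt_le u ((z : E2) - y)
      rw [dt_sub_right, norm_SS, one_mul] at h1
      have h2 := abs_sub_abs_le_abs_sub (dt (u : E2) y) (dt (u : E2) z)
      rw [abs_sub_comm] at h2
      linarith
  obtain ⟨r, hr, ω, hω, H⟩ := key
  exact ⟨r, hr, ω, hω, fun y => H y trivial⟩

lemma lg_average {ν : Measure SS} [IsProbabilityMeasure ν] {r w : ℝ} (hr : 0 < r) (hr1 : r ≤ 1)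
    (H : ∀ y : SS, ν.real {u : SS | |dt (u : E2) y| ≤ 2 * r} ≤ w) (hw : 0 ≤ w) (g : SL2) :
    (1 - 2 * w) * kappa g + Real.log r ≤ ∫ u, lg g u ∂ν := by
  set A : Set SS := {u | ‖T g u‖ < r * opNorm g} with hA
  have hAm : MeasurableSet A :=
    (isOpen_lt (by fun_prop) continuous_const).measurableSet
  have hν : ν.real A ≤ w := by
    by_cases hne : A.Nonempty
    · obtain ⟨y, hy⟩ := hne
      have hy' : ‖T g y‖ < r * opNorm g := hy
      refine le_trans (measureReal_mono fun u hu => ?_) (H y)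
      have hu' : ‖T g u‖ < r * opNorm g := hu
      show |dt (u : E2) y| ≤ 2 * r
      have h1 := opNorm_mul_dt_le g u y
      rw [norm_SS, norm_SS, one_mul, one_mul] at h1
      have h2 : opNorm g * |dt (u : E2) y| ≤ opNorm g * (2 * r) := by linarith
      exact le_of_mul_le_mul_left h2 (opNorm_pos g)
    · rw [Set.not_nonempty_iff_eq_empty.1 hne]; simpa using hw
  have hk := kappa_nonneg g
  have hlow : ∀ u, kappa g + Real.log r - A.indicator (fun _ => 2 * kappa g) u ≤ lg g u := by
    intro u
    have hlr : Real.log r ≤ 0 := Real.log_nonpos hr.le hr1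
    by_cases hu : u ∈ A
    · rw [Set.indicator_of_mem hu]
      have := (abs_le.1 (abs_lg_le g u)).1
      linarith
    · rw [Set.indicator_of_notMem hu]
      have hu' : r * opNorm g ≤ ‖T g u‖ := not_lt.1 hu
      have := Real.log_le_log (mul_pos hr (opNorm_pos g)) hu'
      rw [Real.log_mul hr.ne' (opNorm_pos g).ne'] at this
      unfold lg kappa; linarith
  have hi1 : Integrable (A.indicator (fun _ => 2 * kappa g)) ν :=
    (integrable_const _).indicator hAm
  have hi2 : Integrable (fun u => lg g u) ν :=
    (integrable_const (kappa g)).mono' (continuous_lg_right g).measurable.aestronglyMeasurable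
      (ae_of_all _ fun u => abs_lg_le g u)
  have := integral_mono ((integrable_const (kappa g + Real.log r)).sub hi1) hi2 hlow
  refine le_trans ?_ this
  rw [show (fun u => kappa g + Real.log r) - A.indicator (fun _ => 2 * kappa g) =
    fun u => (kappa g + Real.log r) - A.indicator (fun _ => 2 * kappa g) u from rfl,
    integral_sub (integrable_const _) hi1, integral_indicator_const _ hAm]
  simp only [integral_const, probReal_univ, smul_eq_mul, one_mul]
  nlinarith [mul_le_mul_of_nonneg_right hν hk]

lemma positivity_drift (μ : Measure SL2) [IsProbabilityMeasure μ] (hzd : ZariskiDense μ)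
    (hk : ∀ n, Integrable kappa (cpow μ n)) :
    ∃ n, ∃ l > 0, ∀ u, l ≤ Ig (cpow μ n) u := by
  by_contra! hcon
  have hne : (Set.univ : Set SS).Nonempty := by
    obtain ⟨v, hv⟩ := (NormedSpace.sphere_nonempty (x := (0 : E2)) (r := 1)).2 zero_le_one
    exact ⟨⟨v, hv⟩, trivial⟩
  have hmin : ∀ n, ∃ u, Ig (cpow μ n) u ≤ 0 := by
    intro n
    obtain ⟨u, -, hu⟩ := isCompact_univ.exists_isMinOn hne (continuous_Ig (hk n)).continuousOn
    refine ⟨u, ?_⟩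
    by_contra! hpos
    obtain ⟨z, hz⟩ := hcon n _ hpos
    exact absurd (hu (Set.mem_univ z)) (not_le.2 hz)
  choose v hv using hmin
  obtain ⟨ν, hν, hst, hneg⟩ := exists_stat μ hk v hv
  obtain ⟨r0, hr0, ω, hω, H⟩ := stat_unif (stat_small hzd hst)
  set r : ℝ := min (r0 / 2) 1 with hr
  have hrpos : 0 < r := lt_min (by positivity) one_pos
  have hωt : ω ≠ ⊤ := (hω.trans_le (by simp)).ne
  have hw : ω.toReal < 1 / 2 := by
    have := (ENNReal.toReal_lt_toReal hωt (by simp)).2 hω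
    simpa using this
  have H' : ∀ y : SS, ν.real {u : SS | |dt (u : E2) y| ≤ 2 * r} ≤ ω.toReal := by
    intro y
    refine ENNReal.toReal_mono hωt (le_trans (measure_mono fun u hu => ?_) (H y))
    have hu' : |dt (u : E2) y| ≤ 2 * r := hu
    show |dt (u : E2) y| ≤ r0
    have : r ≤ r0 / 2 := min_le_left _ _
    linarith
  have hbd : ∀ n, (1 - 2 * ω.toReal) * ∫ g, kappa g ∂(cpow μ n) + Real.log r ≤ 0 := by
    intro n
    have h1 := stat_Ig hk hst hneg n
    have hI : Integrable (fun p : SS × SL2 => lg p.2 p.1) (ν.prod (cpow μ n)) := by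
      have hkp : Integrable (fun p : SS × SL2 => kappa p.2) (ν.prod (cpow μ n)) :=
        (hk n).comp_snd ν
      refine hkp.mono' ?_ (ae_of_all _ fun p => abs_lg_le _ _)
      exact (continuous_lg.measurable.comp measurable_swap).aestronglyMeasurable
    have h2 : ∫ u, Ig (cpow μ n) u ∂ν = ∫ g, ∫ u, lg g u ∂ν ∂(cpow μ n) :=
      integral_integral_swap hI
    have h3 : ∫ g, ((1 - 2 * ω.toReal) * kappa g + Real.log r) ∂(cpow μ n) ≤
        ∫ g, ∫ u, lg g u ∂ν ∂(cpow μ n) := by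
      refine integral_mono (((hk n).const_mul _).add (integrable_const _)) hI.integral_prod_right ?_
      intro g
      exact lg_average hrpos (min_le_right _ _) H' ENNReal.toReal_nonneg g
    rw [integral_add ((hk n).const_mul _) (integrable_const _), integral_const_mul] at h3
    simp only [integral_const, probReal_univ, smul_eq_mul, one_mul] at h3
    linarith
  set c : ℝ := 1 - 2 * ω.toReal with hc
  have hcpos : 0 < c := by linarith
  obtain ⟨n, hn⟩ := exists_kappa_large μ hzd (-Real.log r / c)
  rw [← ofReal_integral_eq_lintegral_ofReal (hk n) (ae_of_all _ kappa_nonneg)] at hn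
  have h5 := (ENNReal.ofReal_lt_ofReal_iff').1 hn
  have h6 := hbd n
  rw [div_lt_iff₀ hcpos] at h5
  linarith [h5.1, mul_comm c (∫ g, kappa g ∂(cpow μ n))]

end RW

namespace RW

/-! ### Exponential contraction -/

lemma rpow_eq_exp_lg (g : SL2) (u : SS) (ε : ℝ) : ‖T g u‖ ^ (-ε) = Real.exp (-ε * lg g u) := by
  rw [Real.rpow_def_of_pos (normT_SS_pos g u), mul_comm]; rfl

lemma rpow_le_opNorm (g : SL2) (u : SS) {ε : ℝ} (hε : 0 ≤ ε) : ‖T g u‖ ^ (-ε) ≤ opNorm g ^ ε := by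
  rw [rpow_eq_exp_lg, Real.rpow_def_of_pos (opNorm_pos g), Real.exp_le_exp]
  have := (abs_le.1 (abs_lg_le g u)).1
  change _ ≤ kappa g * ε
  nlinarith

def Ja (ρ : Measure SL2) (ε : ℝ) (u : SS) : ENNReal := ∫⁻ g, ENNReal.ofReal (‖T g u‖ ^ (-ε)) ∂ρ

lemma measurable_Ja_int (ε : ℝ) (u : SS) :
    Measurable fun g => ENNReal.ofReal (‖T g u‖ ^ (-ε)) := by
  simp only [rpow_eq_exp_lg]
  exact ((measurable_lg u).const_mul _).exp.ennreal_ofReal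

lemma Ja_add (μ : Measure SL2) [IsProbabilityMeasure μ] {ε : ℝ} {m n : ℕ} {a b : ENNReal}
    (h1 : ∀ u, Ja (cpow μ m) ε u ≤ a) (h2 : ∀ u, Ja (cpow μ n) ε u ≤ b) (u : SS) :
    Ja (cpow μ (m + n)) ε u ≤ a * b := by
  rw [Ja, lint_add' μ m n (measurable_Ja_int ε u)]
  calc ∫⁻ h, ∫⁻ g, ENNReal.ofReal (‖T (g * h) u‖ ^ (-ε)) ∂(cpow μ m) ∂(cpow μ n)
      = ∫⁻ h, Ja (cpow μ m) ε (sa h u) * ENNReal.ofReal (‖T h u‖ ^ (-ε)) ∂(cpow μ n) := by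
        refine lintegral_congr fun h => ?_
        rw [Ja, ← lintegral_mul_const _ (measurable_Ja_int ε _)]
        refine lintegral_congr fun g => ?_
        rw [← ENNReal.ofReal_mul (by positivity), rpow_eq_exp_lg, rpow_eq_exp_lg, rpow_eq_exp_lg,
          ← Real.exp_add, lg_mul, mul_add]
    _ ≤ ∫⁻ h, a * ENNReal.ofReal (‖T h u‖ ^ (-ε)) ∂(cpow μ n) :=
        lintegral_mono fun h => by gcongr; exact h1 _
    _ = a * Ja (cpow μ n) ε u := lintegral_const_mul _ (measurable_Ja_int ε u)
    _ ≤ a * b := by gcongr; exact h2 u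

lemma Ja_le_Mo (ρ : Measure SL2) {ε : ℝ} (hε : 0 ≤ ε) (u : SS) : Ja ρ ε u ≤ Mo ρ ε :=
  lintegral_mono fun g => ENNReal.ofReal_le_ofReal (rpow_le_opNorm g u hε)

lemma Ja_zero (μ : Measure SL2) (ε : ℝ) (u : SS) : Ja (cpow μ 0) ε u = 1 := by
  rw [Ja, cpow, lintegral_dirac' _ (measurable_Ja_int ε u), T_one, norm_SS]
  simp

lemma Ja_mul (μ : Measure SL2) [IsProbabilityMeasure μ] {ε : ℝ} {n : ℕ} {a : ENNReal}
    (h : ∀ u, Ja (cpow μ n) ε u ≤ a) (k : ℕ) (u : SS) : Ja (cpow μ (n * k)) ε u ≤ a ^ k := by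
  induction k generalizing u with
  | zero => rw [mul_zero, Ja_zero, pow_zero]
  | succ k ih =>
    rw [Nat.mul_succ, pow_succ]
    exact Ja_add μ ih h u

lemma exp_quad (y : ℝ) : Real.exp y ≤ 1 + y + y ^ 2 * Real.exp |y| := by
  have h := Complex.norm_exp_sub_sum_le_norm_mul_exp (y : ℂ) 2
  simp only [Finset.sum_range_succ, Finset.sum_range_zero, pow_zero, Nat.factorial, pow_one,
    Nat.cast_one, div_one, zero_add, mul_one] at h
  rw [← Complex.ofReal_exp, ← Complex.ofReal_one, ← Complex.ofReal_add, ← Complex.ofReal_sub,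
    Complex.norm_real, Complex.norm_real, Real.norm_eq_abs, Real.norm_eq_abs, sq_abs] at h
  have := (abs_le.1 h).2
  linarith

lemma pointwise_quad (g : SL2) (u : SS) {ε ε₁ : ℝ} (hε : 0 < ε) (h1 : 0 < ε₁)
    (hle : ε ≤ ε₁ / 2) :
    ‖T g u‖ ^ (-ε) ≤ 1 - ε * lg g u + ε ^ 2 * (16 / ε₁ ^ 2 * opNorm g ^ ε₁) := by
  rw [rpow_eq_exp_lg]
  refine (exp_quad _).trans ?_
  have hab := abs_lg_le g u
  have hk := kappa_nonneg g
  have hkk : kappa g ^ 2 ≤ 16 / ε₁ ^ 2 * opNorm g ^ (ε₁ / 2) := by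
    have h2 := kappa_le_rpow g (ε := ε₁ / 4) (by positivity)
    calc kappa g ^ 2 ≤ (opNorm g ^ (ε₁ / 4) / (ε₁ / 4)) ^ 2 := by gcongr
      _ = 16 / ε₁ ^ 2 * (opNorm g ^ (ε₁ / 4)) ^ 2 := by field_simp; ring
      _ = 16 / ε₁ ^ 2 * opNorm g ^ (ε₁ / 2) := by
        rw [sq (opNorm g ^ (ε₁ / 4)), ← Real.rpow_add (opNorm_pos g)]; congr 2; ring
  have hexp : Real.exp |(-ε) * lg g u| ≤ opNorm g ^ (ε₁ / 2) := by
    rw [Real.rpow_def_of_pos (opNorm_pos g), Real.exp_le_exp, abs_mul, abs_neg, abs_of_pos hε]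
    change _ ≤ kappa g * _
    rw [mul_comm (kappa g)]
    gcongr
  have hsq : (-ε * lg g u) ^ 2 ≤ ε ^ 2 * kappa g ^ 2 := by
    rw [mul_pow, neg_sq, ← sq_abs (lg g u)]
    gcongr
  have : (-ε * lg g u) ^ 2 * Real.exp |(-ε) * lg g u| ≤
      ε ^ 2 * (16 / ε₁ ^ 2 * opNorm g ^ ε₁) := by
    calc _ ≤ (ε ^ 2 * (16 / ε₁ ^ 2 * opNorm g ^ (ε₁ / 2))) * opNorm g ^ (ε₁ / 2) := by
          have h0 := Real.rpow_nonneg (opNorm_nonneg g) (ε₁ / 2)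
          exact mul_le_mul (hsq.trans (by gcongr)) hexp (Real.exp_pos _).le (by positivity)
      _ = ε ^ 2 * (16 / ε₁ ^ 2 * (opNorm g ^ (ε₁ / 2) * opNorm g ^ (ε₁ / 2))) := by ring
      _ = _ := by rw [← Real.rpow_add (opNorm_pos g), add_halves]
  linarith

lemma contraction (μ : Measure SL2) [IsProbabilityMeasure μ] (hzd : ZariskiDense μ) {ε₁ : ℝ}
    (h1 : 0 < ε₁) (hM : Mo μ ε₁ < ⊤) :
    ∃ ε₀ > 0, ∀ ε, 0 < ε → ε ≤ ε₀ → ∃ C > 0, ∃ c > 0, ∀ (n : ℕ) (u : SS),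
      Ja (cpow μ n) ε u ≤ ENNReal.ofReal (C * Real.exp (-(c * n))) := by
  have hk : ∀ n, Integrable kappa (cpow μ n) := fun n =>
    integrable_kappa _ h1 (Mo_cpow_lt μ h1.le hM n)
  obtain ⟨n₀, l, hl, hpos⟩ := positivity_drift μ hzd hk
  have hirp := integrable_rpow _ (Mo_cpow_lt μ h1.le hM n₀)
  have hn₀ : 0 < n₀ := by
    rcases Nat.eq_zero_or_pos n₀ with h | h
    · exfalso
      subst h
      obtain ⟨v, hv⟩ := (NormedSpace.sphere_nonempty (x := (0 : E2)) (r := 1)).2 zero_le_one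
      have := hpos ⟨v, hv⟩
      simp only [Ig, cpow] at this
      rw [integral_dirac' _ _ (measurable_lg _).stronglyMeasurable] at this
      have hv1 : ‖v‖ = 1 := mem_sphere_zero_iff_norm.1 hv
      simp only [lg, T_one, hv1, Real.log_one] at this
      linarith
    · exact h
  set K : ℝ := 16 / ε₁ ^ 2 * ∫ g, opNorm g ^ ε₁ ∂(cpow μ n₀) with hK
  have hK0 : 0 ≤ K := by
    have : 0 ≤ ∫ g, opNorm g ^ ε₁ ∂(cpow μ n₀) :=
      integral_nonneg fun g => Real.rpow_nonneg (opNorm_nonneg g) _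
    positivity
  refine ⟨min (ε₁ / 2) (l / (2 * (K + 1))), by positivity, fun ε hε hle => ?_⟩
  have hle1 : ε ≤ ε₁ / 2 := hle.trans (min_le_left _ _)
  have hle2 : ε * K ≤ l / 2 := by
    have : ε ≤ l / (2 * (K + 1)) := hle.trans (min_le_right _ _)
    rw [le_div_iff₀ (by positivity)] at this
    nlinarith
  have hJ : ∀ u, Ja (cpow μ n₀) ε u ≤ ENNReal.ofReal (Real.exp (-(ε * l / 2))) := by
    intro u
    have hi1 : Integrable (fun g => 1 - ε * lg g u) (cpow μ n₀) :=
      (integrable_const _).sub ((integrable_lg (hk n₀) u).const_mul ε)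
    have hi2 : Integrable (fun g => ε ^ 2 * (16 / ε₁ ^ 2 * opNorm g ^ ε₁)) (cpow μ n₀) :=
      (hirp.const_mul _).const_mul _
    calc Ja (cpow μ n₀) ε u ≤ ∫⁻ g, ENNReal.ofReal
          (1 - ε * lg g u + ε ^ 2 * (16 / ε₁ ^ 2 * opNorm g ^ ε₁)) ∂(cpow μ n₀) :=
          lintegral_mono fun g => ENNReal.ofReal_le_ofReal (pointwise_quad g u hε h1 hle1)
      _ = ENNReal.ofReal (∫ g, (1 - ε * lg g u + ε ^ 2 * (16 / ε₁ ^ 2 * opNorm g ^ ε₁))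
            ∂(cpow μ n₀)) := by
          refine (ofReal_integral_eq_lintegral_ofReal (hi1.add hi2) ?_).symm
          refine ae_of_all _ fun g => ?_
          exact (Real.rpow_nonneg (norm_nonneg _) _).trans (pointwise_quad g u hε h1 hle1)
      _ ≤ _ := by
          apply ENNReal.ofReal_le_ofReal
          rw [integral_add hi1 hi2, integral_sub (integrable_const _)
            ((integrable_lg (hk n₀) u).const_mul ε), integral_const_mul, integral_const_mul,
            integral_const_mul, ← hK]
          simp only [integral_const, probReal_univ, smul_eq_mul, one_mul]
          have h3 : l ≤ ∫ g, lg g u ∂(cpow μ n₀) := hpos u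
          have h4 := Real.add_one_le_exp (-(ε * l / 2))
          nlinarith [mul_le_mul_of_nonneg_left h3 hε.le, mul_le_mul_of_nonneg_left hle2 hε.le]
  have hMε : Mo μ ε < ⊤ := (Mo_mono μ (by linarith : ε ≤ ε₁)).trans_lt hM
  have hM1 : 1 ≤ Mo μ ε := one_le_Mo μ hε.le
  set R : ℝ := (Mo μ ε).toReal with hR
  have hR1 : 1 ≤ R := by
    have := ENNReal.toReal_mono hMε.ne hM1
    simpa using this
  have hMR : Mo μ ε = ENNReal.ofReal R := (ENNReal.ofReal_toReal hMε.ne).symm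
  refine ⟨R ^ n₀ * Real.exp (ε * l / 2), by positivity, ε * l / 2 / n₀, by positivity, ?_⟩
  intro n u
  have hJr : ∀ u, Ja (cpow μ (n % n₀)) ε u ≤ ENNReal.ofReal (R ^ n₀) := by
    intro u
    refine (Ja_le_Mo _ hε.le u).trans ((Mo_cpow μ hε.le _).trans ?_)
    rw [hMR, ← ENNReal.ofReal_pow (by positivity)]
    exact ENNReal.ofReal_le_ofReal (pow_le_pow_right₀ hR1 (Nat.mod_lt _ hn₀).le)
  have h5 := Ja_add μ (Ja_mul μ hJ (n / n₀)) hJr u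
  rw [Nat.div_add_mod] at h5
  refine h5.trans ?_
  rw [← ENNReal.ofReal_pow (Real.exp_pos _).le, ← ENNReal.ofReal_mul (by positivity),
    ← Real.exp_nat_mul]
  apply ENNReal.ofReal_le_ofReal
  rw [mul_comm, mul_assoc, ← Real.exp_add]
  gcongr
  have h6 : (n : ℝ) ≤ n₀ * ((n / n₀ : ℕ) : ℝ) + n₀ := by
    have h7 := Nat.div_add_mod n n₀
    have h8 := Nat.mod_lt n hn₀
    have : n ≤ n₀ * (n / n₀) + n₀ := by omega
    exact_mod_cast this
  have hn0' : (0 : ℝ) < n₀ := by exact_mod_cast hn₀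
  have h9 : ε * l / 2 / n₀ * n ≤ ε * l / 2 / n₀ * (n₀ * ((n / n₀ : ℕ) : ℝ) + n₀) := by gcongr
  have h10 : ε * l / 2 / n₀ * (n₀ * ((n / n₀ : ℕ) : ℝ) + n₀) =
      ε * l / 2 * ((n / n₀ : ℕ) : ℝ) + ε * l / 2 := by field_simp
  linarith

/-! ### Transposition -/

lemma zd_tr (μ : Measure SL2) [IsProbabilityMeasure μ] (hzd : ZariskiDense μ) :
    ZariskiDense (μ.map tr) := by
  intro hsol
  apply hzd
  let φ : SL2 →* SL2 :=
    { toFun := fun s => (tr s)⁻¹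
      map_one' := by rw [tr_one, inv_one]
      map_mul' := fun a b => by rw [tr_mul, mul_inv_rev] }
  have hφ : Function.Injective φ := by
    intro a b hab
    have h : tr a = tr b := inv_injective hab
    rw [← tr_tr a, h, tr_tr]
  have hle : Subgroup.closure (measSupp μ) ≤
      (Subgroup.closure (measSupp (μ.map tr))).comap φ := by
    rw [Subgroup.closure_le]
    intro s hs
    refine Subgroup.inv_mem _ (Subgroup.subset_closure ?_)
    intro U hU hsU
    rw [Measure.map_apply continuous_tr.measurable hU.measurableSet]
    exact hs _ (hU.preimage continuous_tr) hsU
  let ψ := (φ.comp (Subgroup.closure (measSupp μ)).subtype).codRestrict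
    (Subgroup.closure (measSupp (μ.map tr))) (fun x => hle x.2)
  have hsol' : Group.IsSolvable (Subgroup.closure (measSupp (μ.map tr))) := hsol
  refine Group.isSolvable_of_isSolvable_injective (f := ψ) ?_
  intro a b hab
  apply Subtype.ext
  apply hφ
  exact congrArg Subtype.val hab

end RW

namespace RW

/-! ### Norm versus image norm -/

lemma one_step (h b : SL2) (y : SS) :
    opNorm (h * b) / ‖T (h * b) y‖ ≤ opNorm b / ‖T b y‖ + opNorm h ^ 2 * (‖T b y‖ ^ 2)⁻¹ := by
  obtain ⟨z, hz1, hz⟩ := exists_norm_eq (h * b)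
  have hpos := normT_SS_pos b y
  have hpos2 := normT_SS_pos (h * b) y
  set m := T b (y : E2) with hm
  have hlin : ‖m‖ ^ 2 • T b z = ip (T b z) m • m + dt (y : E2) z • rot m := by
    have h1 : dt (y : E2) z = dt m (T b z) := (dt_T b y z).symm
    rw [h1, norm_sq_eq]
    ext i
    fin_cases i <;> simp [dt, ip] <;> ring
  have hh : ‖m‖ ^ 2 • T (h * b) z = ip (T b z) m • T (h * b) y + dt (y : E2) z • T h (rot m) := by
    rw [T_mul, T_mul, ← map_smul, hlin, map_add, map_smul, map_smul]
  have hn : ‖m‖ ^ 2 * opNorm (h * b) ≤ opNorm b * ‖m‖ * ‖T (h * b) y‖ + opNorm h * ‖m‖ := by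
    rw [← hz]
    calc ‖m‖ ^ 2 * ‖T (h * b) z‖ = ‖‖m‖ ^ 2 • T (h * b) z‖ := by
          rw [norm_smul, norm_pow, norm_norm]
      _ ≤ |ip (T b z) m| * ‖T (h * b) y‖ + |dt (y : E2) z| * ‖T h (rot m)‖ := by
          rw [hh]
          refine (norm_add_le _ _).trans ?_
          rw [norm_smul, norm_smul, Real.norm_eq_abs, Real.norm_eq_abs]
      _ ≤ (opNorm b * ‖m‖) * ‖T (h * b) y‖ + 1 * (opNorm h * ‖m‖) := by
          have e1 := abs_ip_le (T b z) m
          have e2 := norm_T_le b z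
          have e3 := abs_dt_le y z
          have e4 := norm_T_le h (rot m)
          rw [hz1, mul_one] at e2
          rw [norm_SS, hz1, mul_one] at e3
          rw [norm_rot] at e4
          gcongr
          exact e1.trans (by gcongr)
      _ = _ := by ring
  have hle : ‖m‖ ≤ opNorm h * ‖T (h * b) y‖ := by
    rw [T_mul]; exact le_norm_T h m
  have hoh := opNorm_pos h
  rw [div_add' _ _ _ hpos.ne', div_le_div_iff₀ hpos2 hpos]
  have e5 : opNorm h * ‖m‖ ≤ opNorm h ^ 2 * ‖T (h * b) y‖ := by nlinarith
  have e6 : ‖m‖ * (opNorm (h * b) * ‖m‖) ≤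
      ‖m‖ * ((opNorm b + opNorm h ^ 2 * (‖m‖ ^ 2)⁻¹ * ‖m‖) * ‖T (h * b) y‖) := by
    have : ‖m‖ * ((opNorm b + opNorm h ^ 2 * (‖m‖ ^ 2)⁻¹ * ‖m‖) * ‖T (h * b) y‖) =
      opNorm b * ‖m‖ * ‖T (h * b) y‖ + opNorm h ^ 2 * ‖T (h * b) y‖ := by
      field_simp
    rw [this]
    nlinarith
  exact le_of_mul_le_mul_left e6 hpos

def Rt (ρ : Measure SL2) (ε : ℝ) (u : SS) : ENNReal :=
  ∫⁻ g, ENNReal.ofReal ((opNorm g / ‖T g u‖) ^ ε) ∂ρ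

lemma measurable_normT (u : SS) : Measurable fun g => ‖T g (u : E2)‖ := by
  have := continuous_T
  have h : Continuous fun g => ‖T g (u : E2)‖ := by fun_prop
  exact h.measurable

lemma measurable_Rt_int (ε : ℝ) (u : SS) :
    Measurable fun g => ENNReal.ofReal ((opNorm g / ‖T g u‖) ^ ε) :=
  ((continuous_opNorm.measurable.div (measurable_normT u)).pow_const ε).ennreal_ofReal

lemma Rt_zero (μ : Measure SL2) (ε : ℝ) (u : SS) : Rt (cpow μ 0) ε u = 1 := by
  rw [Rt, cpow, lintegral_dirac' _ (measurable_Rt_int ε u), T_one, norm_SS, opNorm_one]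
  simp

lemma Rt_succ (μ : Measure SL2) [IsProbabilityMeasure μ] {ε : ℝ} (hε : 0 ≤ ε) (hε1 : ε ≤ 1)
    (n : ℕ) (u : SS) :
    Rt (cpow μ (n + 1)) ε u ≤ Rt (cpow μ n) ε u + Mo μ (2 * ε) * Ja (cpow μ n) (2 * ε) u := by
  have hpt : ∀ h b : SL2, ENNReal.ofReal ((opNorm (h * b) / ‖T (h * b) u‖) ^ ε) ≤
      ENNReal.ofReal ((opNorm b / ‖T b u‖) ^ ε) +
      ENNReal.ofReal (opNorm h ^ (2 * ε)) * ENNReal.ofReal (‖T b u‖ ^ (-(2 * ε))) := by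
    intro h b
    have h0 := opNorm_nonneg h
    have h0b := opNorm_nonneg b
    have h0h := opNorm_nonneg (h * b)
    rw [← ENNReal.ofReal_mul (by positivity), ← ENNReal.ofReal_add (by positivity) (by positivity)]
    apply ENNReal.ofReal_le_ofReal
    calc (opNorm (h * b) / ‖T (h * b) u‖) ^ ε
        ≤ (opNorm b / ‖T b u‖ + opNorm h ^ 2 * (‖T b u‖ ^ 2)⁻¹) ^ ε :=
          Real.rpow_le_rpow (by positivity) (one_step h b u) hε
      _ ≤ (opNorm b / ‖T b u‖) ^ ε + (opNorm h ^ 2 * (‖T b u‖ ^ 2)⁻¹) ^ ε :=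
          Real.rpow_add_le_add_rpow (by positivity) (by positivity) hε hε1
      _ = _ := by
          congr 1
          rw [Real.mul_rpow (by positivity) (by positivity), Real.inv_rpow (by positivity),
            ← Real.rpow_natCast, ← Real.rpow_natCast, ← Real.rpow_mul h0,
            ← Real.rpow_mul (norm_nonneg _), Real.rpow_neg (norm_nonneg _)]
          norm_num
  rw [Rt, lint_succ μ n (measurable_Rt_int ε u)]
  calc ∫⁻ h, ∫⁻ b, ENNReal.ofReal ((opNorm (h * b) / ‖T (h * b) u‖) ^ ε) ∂(cpow μ n) ∂μ
      ≤ ∫⁻ h, (Rt (cpow μ n) ε u +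
          ENNReal.ofReal (opNorm h ^ (2 * ε)) * Ja (cpow μ n) (2 * ε) u) ∂μ := by
        refine lintegral_mono fun h => ?_
        refine (lintegral_mono fun b => hpt h b).trans (le_of_eq ?_)
        rw [lintegral_add_left (measurable_Rt_int ε u),
          lintegral_const_mul _ (measurable_Ja_int _ u)]
        rfl
    _ = _ := by
        rw [lintegral_add_left measurable_const,
          lintegral_mul_const _ (continuous_opNorm_rpow _).measurable.ennreal_ofReal]
        simp [Mo]

lemma geom_lt_top (C : ℝ) {c : ℝ} (hc : 0 < c) (hC : 0 ≤ C) :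
    ∑' j : ℕ, ENNReal.ofReal (C * Real.exp (-(c * j))) = ENNReal.ofReal (C / (1 - Real.exp (-c))) := by
  have he : Real.exp (-c) < 1 := Real.exp_lt_one_iff.2 (by linarith)
  have hs : HasSum (fun j : ℕ => C * Real.exp (-(c * j))) (C / (1 - Real.exp (-c))) := by
    have := (hasSum_geometric_of_lt_one (Real.exp_pos (-c)).le he).mul_left C
    rw [div_eq_mul_inv]
    have hf : (fun j : ℕ => C * Real.exp (-(c * j))) = fun j : ℕ => C * Real.exp (-c) ^ j := by
      funext j
      rw [← Real.exp_nat_mul]; congr 2; ring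
    rw [hf]; exact this
  rw [← ENNReal.ofReal_tsum_of_nonneg (fun j => by positivity) hs.summable, hs.tsum_eq]

lemma Rt_bound (μ : Measure SL2) [IsProbabilityMeasure μ] {ε : ℝ} (hε : 0 ≤ ε) (hε1 : ε ≤ 1)
    (hM : Mo μ (2 * ε) < ⊤) {C c : ℝ} (hC : 0 < C) (hc : 0 < c)
    (hJ : ∀ (n : ℕ) (u : SS), Ja (cpow μ n) (2 * ε) u ≤ ENNReal.ofReal (C * Real.exp (-(c * n)))) :
    ∃ D > (0 : ℝ), ∀ (n : ℕ) (u : SS), Rt (cpow μ n) ε u ≤ ENNReal.ofReal D := by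
  set B : ENNReal := 1 + Mo μ (2 * ε) * ∑' j : ℕ, ENNReal.ofReal (C * Real.exp (-(c * j))) with hB
  have hBt : B < ⊤ := by
    rw [hB, geom_lt_top C hc hC.le]
    exact ENNReal.add_lt_top.2 ⟨by simp, ENNReal.mul_lt_top hM ENNReal.ofReal_lt_top⟩
  refine ⟨B.toReal, ?_, fun n u => ?_⟩
  · refine ENNReal.toReal_pos ?_ hBt.ne
    rw [hB]; simp
  rw [ENNReal.ofReal_toReal hBt.ne]
  have key : ∀ n, Rt (cpow μ n) ε u ≤ 1 + Mo μ (2 * ε) *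
      ∑ j ∈ Finset.range n, ENNReal.ofReal (C * Real.exp (-(c * j))) := by
    intro n
    induction n with
    | zero => rw [Rt_zero]; simp
    | succ n ih =>
      refine (Rt_succ μ hε hε1 n u).trans ?_
      rw [Finset.sum_range_succ, mul_add, ← add_assoc]
      gcongr
      exact hJ n u
  refine (key n).trans ?_
  rw [hB]
  gcongr
  exact ENNReal.sum_le_tsum _

/-! ### Hölder regularity -/

def Bd (y v : SS) (δ : ℝ) : Set SL2 := {b | |dt (T b y) v| ≤ δ * ‖T b y‖}

lemma isClosed_Bd (y v : SS) (δ : ℝ) : IsClosed (Bd y v δ) := by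
  have := continuous_T
  refine isClosed_le ?_ (by fun_prop)
  unfold dt; fun_prop

lemma norm_mul_norm_tr (b : SL2) (y w : E2) (hy : ‖y‖ = 1) (hw : ‖w‖ = 1) :
    ‖T b y‖ * ‖T (tr b) w‖ ≤ 4 * |ip (T b y) w| * opNorm b + 1 := by
  set p := ip (T b y) w with hp
  set q := ip (T b y) (rot w) with hq
  set r := ip (T b (rot y)) w with hr
  set s := ip (T b (rot y)) (rot w) with hs
  have hdec : ∀ v e : E2, ‖e‖ = 1 → ‖v‖ ^ 2 = ip v e ^ 2 + ip v (rot e) ^ 2 := by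
    intro v e he
    have h1 : ‖v‖ ^ 2 * ‖e‖ ^ 2 = ip v e ^ 2 + ip v (rot e) ^ 2 := by
      rw [norm_sq_eq, norm_sq_eq]; simp [ip]; ring
    rw [he] at h1; linarith
  have h1 : ‖T b y‖ ^ 2 = p ^ 2 + q ^ 2 := hdec _ w hw
  have hsymm : ∀ v e : E2, ip v e = ip e v := by intro v e; simp [ip]; ring
  have h2 : ‖T (tr b) w‖ ^ 2 = p ^ 2 + r ^ 2 := by
    rw [hdec _ y hy, hsymm _ y, hsymm _ (rot y), ← ip_T, ← ip_T]
  have hdet : p * s - q * r = 1 := by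
    have e1 : p * s - q * r = dt (T b y) (T b (rot y)) * dt w (rot w) := by
      simp only [hp, hq, hr, hs, ip, dt, rot_zero, rot_one]; ring
    rw [e1, dt_T, dt_rot, dt_rot, hy, hw]; norm_num
  have hb := opNorm_nonneg b
  have hent : ∀ v e : E2, ‖v‖ = 1 → ‖e‖ = 1 → |ip (T b v) e| ≤ opNorm b := by
    intro v e hv he
    have := abs_ip_le (T b v) e
    have h3 := norm_T_le b v
    rw [he, mul_one] at this
    rw [hv, mul_one] at h3
    linarith
  have hry : ‖rot y‖ = 1 := by rw [norm_rot, hy]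
  have hrw : ‖rot w‖ = 1 := by rw [norm_rot, hw]
  have b1 : |p| ≤ opNorm b := hent _ _ hy hw
  have b2 : |q| ≤ opNorm b := hent _ _ hy hrw
  have b3 : |r| ≤ opNorm b := hent _ _ hry hw
  have b4 : |s| ≤ opNorm b := hent _ _ hry hrw
  have c1 : ‖T b y‖ ≤ |p| + |q| := by
    refine abs_le_of_sq_le_sq' ?_ (by positivity) |>.2
    rw [h1, ← sq_abs p, ← sq_abs q]; nlinarith [abs_nonneg p, abs_nonneg q, mul_nonneg (abs_nonneg p) (abs_nonneg q)]
  have c2 : ‖T (tr b) w‖ ≤ |p| + |r| := by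
    refine abs_le_of_sq_le_sq' ?_ (by positivity) |>.2
    rw [h2, ← sq_abs p, ← sq_abs r]; nlinarith [abs_nonneg p, abs_nonneg r, mul_nonneg (abs_nonneg p) (abs_nonneg r)]
  have c3 : |q| * |r| ≤ |p| * |s| + 1 := by
    rw [← abs_mul, ← abs_mul]
    have : q * r = p * s - 1 := by linarith
    rw [this]
    refine (abs_sub _ _).trans ?_
    simp
  calc ‖T b y‖ * ‖T (tr b) w‖ ≤ (|p| + |q|) * (|p| + |r|) := by gcongr
    _ = |p| * |p| + |p| * |r| + |p| * |q| + |q| * |r| := by ring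
    _ ≤ |p| * opNorm b + |p| * opNorm b + |p| * opNorm b + (|p| * opNorm b + 1) := by
      have : |p| * |s| ≤ |p| * opNorm b := by gcongr
      gcongr
      linarith
    _ = _ := by ring

def rotS (v : SS) : SS := ⟨rot v, by rw [mem_sphere_zero_iff_norm, norm_rot, norm_SS]⟩

lemma Bd_pointwise (y v : SS) {δ ε : ℝ} (hδ : 0 < δ) (hε : 0 < ε) (b : SL2) (hb : b ∈ Bd y v δ) :
    1 ≤ (5 * δ) ^ (ε / 2) * ((opNorm b / ‖T b y‖) ^ ε +
        (opNorm b / ‖T (tr b) (rotS v)‖) ^ ε) + δ ^ (-ε) * ‖T b y‖ ^ (-(2 * ε)) := by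
  have hb' : |dt (T b y) v| ≤ δ * ‖T b y‖ := hb
  have hpos := normT_SS_pos b y
  have hpos2 := normT_SS_pos (tr b) (rotS v)
  have hob := opNorm_pos b
  have hip : |ip (T b y) (rotS v)| = |dt (T b y) v| := by
    rw [← abs_neg]
    congr 1
    show - ip (T b y) (rot v) = _
    simp [ip, dt]; ring
  have hmain := norm_mul_norm_tr b y (rotS v) (norm_SS y) (norm_SS (rotS v))
  rw [hip] at hmain
  have hTy : ‖T b y‖ ≤ opNorm b := by
    have := norm_T_le b y; rwa [norm_SS, mul_one] at this
  set P := opNorm b / ‖T b y‖ with hP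
  set Q := opNorm b / ‖T (tr b) (rotS v)‖ with hQ
  have hP0 : 0 < P := by positivity
  have hQ0 : 0 < Q := by positivity
  by_cases hcase : 1 ≤ δ * opNorm b ^ 2
  · have h5 : ‖T b y‖ * ‖T (tr b) (rotS v)‖ ≤ 5 * δ * opNorm b ^ 2 := by
      have : |dt (T b y) v| * opNorm b ≤ δ * opNorm b * opNorm b := by
        gcongr
        exact hb'.trans (by gcongr)
      nlinarith
    have hPQ : 1 ≤ 5 * δ * (P * Q) := by
      rw [hP, hQ, div_mul_div_comm, mul_div_assoc', le_div_iff₀ (by positivity)]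
      nlinarith
    have hmax : 1 ≤ 5 * δ * (max P Q) ^ 2 := by
      refine hPQ.trans ?_
      have : P * Q ≤ max P Q ^ 2 := by
        rw [sq]; gcongr
        · exact le_max_left _ _
        · exact le_max_right _ _
      gcongr
    have hmax0 : 0 < max P Q := lt_max_of_lt_left hP0
    have h6 : 1 ≤ (5 * δ) ^ (ε / 2) * (max P Q) ^ ε := by
      have h7 := Real.one_le_rpow hmax (by positivity : 0 ≤ ε / 2)
      rw [Real.mul_rpow (by positivity) (by positivity), ← Real.rpow_natCast, ← Real.rpow_mul hmax0.le]
        at h7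
      have h8 : ((2 : ℕ) : ℝ) * (ε / 2) = ε := by push_cast; ring
      rwa [h8] at h7
    have h9 : (max P Q) ^ ε ≤ P ^ ε + Q ^ ε := by
      have a1 := Real.rpow_nonneg hP0.le ε
      have a2 := Real.rpow_nonneg hQ0.le ε
      rcases max_choice P Q with h | h <;> rw [h] <;> linarith
    have h10 : 0 ≤ δ ^ (-ε) * ‖T b y‖ ^ (-(2 * ε)) := by positivity
    have h11 : (5 * δ) ^ (ε / 2) * (max P Q) ^ ε ≤ (5 * δ) ^ (ε / 2) * (P ^ ε + Q ^ ε) := by gcongr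
    linarith
  · have h1 : δ * ‖T b y‖ ^ 2 ≤ 1 := by
      push Not at hcase
      refine le_trans ?_ hcase.le
      gcongr
    have h2 := Real.rpow_le_one (by positivity) h1 hε.le
    rw [Real.mul_rpow (by positivity) (by positivity), ← Real.rpow_natCast,
      ← Real.rpow_mul hpos.le] at h2
    have h3 : 1 ≤ δ ^ (-ε) * ‖T b y‖ ^ (-(2 * ε)) := by
      rw [Real.rpow_neg hδ.le, Real.rpow_neg hpos.le, ← mul_inv]
      refine (one_le_inv₀ (by positivity)).2 ?_
      exact_mod_cast h2
    have h4 : 0 ≤ (5 * δ) ^ (ε / 2) * (P ^ ε + Q ^ ε) := by positivity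
    linarith

end RW

namespace RW

/-! ### Uniform regularity of the laws of `T b y` -/

lemma Rt_tr (μ : Measure SL2) [IsProbabilityMeasure μ] (ε : ℝ) (n : ℕ) (u : SS) :
    Rt (cpow (μ.map tr) n) ε u =
      ∫⁻ b, ENNReal.ofReal ((opNorm b / ‖T (tr b) (u : E2)‖) ^ ε) ∂(cpow μ n) := by
  rw [Rt, cpow_tr, lintegral_map (measurable_Rt_int ε u) continuous_tr.measurable]
  simp only [opNorm_tr]

lemma measurable_Rt_int_tr (ε : ℝ) (u : SS) :
    Measurable fun b => ENNReal.ofReal ((opNorm b / ‖T (tr b) (u : E2)‖) ^ ε) := by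
  have h := (measurable_Rt_int ε u).comp continuous_tr.measurable
  simp only [Function.comp_def, opNorm_tr] at h
  exact h

lemma Bd_bound (μ : Measure SL2) [IsProbabilityMeasure μ] (hzd : ZariskiDense μ)
    {ε₁ : ℝ} (h1 : 0 < ε₁) (hM : Mo μ ε₁ < ⊤) :
    ∃ ε > (0 : ℝ), ∃ C > (0 : ℝ), ∃ c > (0 : ℝ), ∀ (s : ℝ) (k : ℕ) (y v : SS),
      cpow μ k (Bd y v (Real.exp (-s))) ≤
        ENNReal.ofReal (C * (Real.exp (-(ε * s)) + Real.exp (2 * ε * s - c * k))) := by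
  have := map_tr_prob μ
  obtain ⟨ea, hea, Ha⟩ := contraction μ hzd h1 hM
  have hM' : Mo (μ.map tr) ε₁ < ⊤ := by rw [Mo_tr]; exact hM
  obtain ⟨eb, heb, Hb⟩ := contraction (μ.map tr) (zd_tr μ hzd) h1 hM'
  obtain ⟨ε, hε, hε1, hεa, hεb, hεM⟩ : ∃ ε : ℝ, 0 < ε ∧ ε ≤ 1 ∧ 2 * ε ≤ ea ∧ 2 * ε ≤ eb ∧
      2 * ε ≤ ε₁ := by
    refine ⟨min 1 (min (ea / 2) (min (eb / 2) (ε₁ / 2))), by positivity, min_le_left _ _, ?_, ?_, ?_⟩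
    · have : min 1 (min (ea / 2) (min (eb / 2) (ε₁ / 2))) ≤ ea / 2 :=
        (min_le_right _ _).trans (min_le_left _ _)
      linarith
    · have : min 1 (min (ea / 2) (min (eb / 2) (ε₁ / 2))) ≤ eb / 2 :=
        (min_le_right _ _).trans ((min_le_right _ _).trans (min_le_left _ _))
      linarith
    · have : min 1 (min (ea / 2) (min (eb / 2) (ε₁ / 2))) ≤ ε₁ / 2 :=
        (min_le_right _ _).trans ((min_le_right _ _).trans (min_le_right _ _))
      linarith
  obtain ⟨Ca, hCa, ca, hca, Ja1⟩ := Ha (2 * ε) (by linarith) hεa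
  obtain ⟨Cb, hCb, cb, hcb, Jb1⟩ := Hb (2 * ε) (by linarith) hεb
  have hMa : Mo μ (2 * ε) < ⊤ := (Mo_mono μ hεM).trans_lt hM
  have hMb : Mo (μ.map tr) (2 * ε) < ⊤ := (Mo_mono _ hεM).trans_lt hM'
  obtain ⟨Da, hDa, Ra⟩ := Rt_bound μ hε.le hε1 hMa hCa hca Ja1
  obtain ⟨Db, hDb, Rb⟩ := Rt_bound (μ.map tr) hε.le hε1 hMb hCb hcb Jb1
  refine ⟨ε / 2, by positivity, (5 : ℝ) ^ (ε / 2) * (Da + Db) + Ca, by positivity, ca, hca, ?_⟩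
  intro s k y v
  set δ := Real.exp (-s) with hδ
  have hδ0 : 0 < δ := Real.exp_pos _
  set f : SL2 → ENNReal := fun b =>
    ENNReal.ofReal ((5 * δ) ^ (ε / 2)) * (ENNReal.ofReal ((opNorm b / ‖T b (y : E2)‖) ^ ε) +
      ENNReal.ofReal ((opNorm b / ‖T (tr b) (rotS v : E2)‖) ^ ε)) +
    ENNReal.ofReal (δ ^ (-ε)) * ENNReal.ofReal (‖T b (y : E2)‖ ^ (-(2 * ε))) with hf
  have m1 := measurable_Rt_int ε y
  have m2 := measurable_Rt_int_tr ε (rotS v)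
  have m3 := measurable_Ja_int (2 * ε) y
  have hfm : Measurable f := ((m1.add m2).const_mul _).add (m3.const_mul _)
  have hle : cpow μ k (Bd y v δ) ≤ ∫⁻ b, f b ∂(cpow μ k) := by
    refine meas_le_lintegral₀ hfm.aemeasurable fun b hb => ?_
    have hh := Bd_pointwise y v hδ0 hε b hb
    have o := opNorm_nonneg b
    rw [hf]
    simp only
    rw [← ENNReal.ofReal_add (by positivity) (by positivity), ← ENNReal.ofReal_mul (by positivity),
      ← ENNReal.ofReal_mul (by positivity), ← ENNReal.ofReal_add (by positivity) (by positivity),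
      ENNReal.one_le_ofReal]
    exact hh
  have hintg : ∫⁻ b, f b ∂(cpow μ k) = ENNReal.ofReal ((5 * δ) ^ (ε / 2)) *
      (Rt (cpow μ k) ε y + Rt (cpow (μ.map tr) k) ε (rotS v)) +
      ENNReal.ofReal (δ ^ (-ε)) * Ja (cpow μ k) (2 * ε) y := by
    have m4 : Measurable fun b => ENNReal.ofReal ((opNorm b / ‖T b (y : E2)‖) ^ ε) +
      ENNReal.ofReal ((opNorm b / ‖T (tr b) (rotS v : E2)‖) ^ ε) := m1.add m2
    rw [Rt_tr, hf]
    simp only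
    rw [lintegral_add_left (m4.const_mul _), lintegral_const_mul _ m4,
      lintegral_add_left m1, lintegral_const_mul _ m3]
    rfl
  refine hle.trans ?_
  rw [hintg]
  calc _ ≤ ENNReal.ofReal ((5 * δ) ^ (ε / 2)) * (ENNReal.ofReal Da + ENNReal.ofReal Db) +
      ENNReal.ofReal (δ ^ (-ε)) * ENNReal.ofReal (Ca * Real.exp (-(ca * k))) := by
        gcongr
        · exact Ra k y
        · exact Rb k _
        · exact Ja1 k y
    _ = ENNReal.ofReal ((5 * δ) ^ (ε / 2) * (Da + Db) + δ ^ (-ε) * (Ca * Real.exp (-(ca * k)))) := by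
        rw [← ENNReal.ofReal_add (by positivity) (by positivity), ← ENNReal.ofReal_mul (by positivity),
          ← ENNReal.ofReal_mul (by positivity), ← ENNReal.ofReal_add (by positivity) (by positivity)]
    _ ≤ _ := by
        apply ENNReal.ofReal_le_ofReal
        have e1 : (5 * δ) ^ (ε / 2) = 5 ^ (ε / 2) * Real.exp (-(ε / 2 * s)) := by
          rw [Real.mul_rpow (by norm_num) hδ0.le, hδ, ← Real.exp_mul]; congr 2; ring
        have e2 : δ ^ (-ε) * (Ca * Real.exp (-(ca * k))) =
            Ca * Real.exp (2 * (ε / 2) * s - ca * k) := by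
          rw [hδ, ← Real.exp_mul, mul_left_comm, ← Real.exp_add]; congr 2; ring
        rw [e1, e2]
        have p1 := Real.exp_pos (-(ε / 2 * s))
        have p2 := Real.exp_pos (2 * (ε / 2) * s - ca * k)
        have p3 : 0 < (5 : ℝ) ^ (ε / 2) * (Da + Db) := by positivity
        nlinarith [mul_pos hCa p1, mul_pos p3 p2]

/-! ### Renewal bound -/

lemma low_norm_sum (μ : Measure SL2) [IsProbabilityMeasure μ] {ε C c : ℝ} (hε : 0 < ε) (hC : 0 < C)
    (hc : 0 < c)
    (hJ : ∀ (n : ℕ) (u : SS), Ja (cpow μ n) ε u ≤ ENNReal.ofReal (C * Real.exp (-(c * n))))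
    (L : ℝ) (hL : 0 ≤ L) (f : SS) :
    ∑' m : ℕ, cpow μ m {h | ‖T h (f : E2)‖ ≤ Real.exp L} ≤
      ENNReal.ofReal ((1 + ε / c + C / (1 - Real.exp (-c))) * (1 + L)) := by
  have h0 : ∀ m : ℕ, cpow μ m {h | ‖T h (f : E2)‖ ≤ Real.exp L} ≤
      ENNReal.ofReal (C * Real.exp (ε * L - c * m)) := by
    intro m
    have h1 : cpow μ m {h | ‖T h (f : E2)‖ ≤ Real.exp L} ≤
        ∫⁻ b, ENNReal.ofReal (Real.exp (ε * L)) * ENNReal.ofReal (‖T b (f : E2)‖ ^ (-ε))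
          ∂(cpow μ m) := by
      refine meas_le_lintegral₀ ((measurable_Ja_int ε f).const_mul _).aemeasurable fun b hb => ?_
      have hb' : ‖T b (f : E2)‖ ≤ Real.exp L := hb
      have hp := normT_SS_pos b f
      rw [← ENNReal.ofReal_mul (by positivity), ENNReal.one_le_ofReal, Real.rpow_neg hp.le,
        ← div_eq_mul_inv, one_le_div (by positivity), mul_comm, Real.exp_mul]
      exact Real.rpow_le_rpow hp.le hb' hε.le
    refine h1.trans ?_
    rw [lintegral_const_mul _ (measurable_Ja_int ε f)]
    refine (mul_le_mul_right (hJ m f) _).trans ?_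
    rw [← ENNReal.ofReal_mul (by positivity)]
    apply ENNReal.ofReal_le_ofReal
    rw [mul_left_comm, ← Real.exp_add]
    apply le_of_eq; congr 2
  set N := ⌈ε * L / c⌉₊ with hN
  have hN1 : ε * L / c ≤ N := Nat.le_ceil _
  have hN2 : (N : ℝ) < ε * L / c + 1 := Nat.ceil_lt_add_one (by positivity)
  have he : Real.exp (-c) < 1 := Real.exp_lt_one_iff.2 (by linarith)
  have hden : 0 < 1 - Real.exp (-c) := by linarith
  rw [← Summable.sum_add_tsum_nat_add' (k := N) ENNReal.summable]
  calc _ ≤ ∑ m ∈ Finset.range N, (1 : ENNReal) +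
      ∑' m : ℕ, ENNReal.ofReal (C * Real.exp (-(c * m))) := by
        refine add_le_add (Finset.sum_le_sum fun m _ => prob_le_one) ?_
        refine ENNReal.tsum_le_tsum fun m => (h0 _).trans ?_
        apply ENNReal.ofReal_le_ofReal
        gcongr
        push_cast
        rw [div_le_iff₀ hc] at hN1
        nlinarith
    _ = ENNReal.ofReal (N + C / (1 - Real.exp (-c))) := by
        rw [geom_lt_top C hc hC.le, ENNReal.ofReal_add (by positivity) (by positivity)]
        simp
    _ ≤ _ := by
        apply ENNReal.ofReal_le_ofReal
        have h5 : 0 < C / (1 - Real.exp (-c)) := by positivity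
        have h6 : 0 < ε / c := by positivity
        have h7 : ε * L / c = ε / c * L := by ring
        rw [h7] at hN2
        nlinarith [mul_nonneg h5.le hL]

def Kset (u L : ℝ) : Set SL2 := {g | kappa g ∈ Set.Icc u (u + L)}

lemma measurableSet_Kset (u L : ℝ) : MeasurableSet (Kset u L) :=
  continuous_kappa.measurable measurableSet_Icc

lemma renewal_max (μ : Measure SL2) [IsProbabilityMeasure μ] (u L : ℝ) (W : ENNReal)
    (hW : ∀ f : SS, ∑' m : ℕ, cpow μ m {h | ‖T h (f : E2)‖ ≤ Real.exp L} ≤ W)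
    (N : ℕ) : ∀ g : SL2, ∑ n ∈ Finset.range N, cpow μ n {h | h * g ∈ Kset u L} ≤ W := by
  have hK := measurableSet_Kset u L
  have hmeas : ∀ g : SL2, MeasurableSet {h | h * g ∈ Kset u L} := fun g =>
    (measurable_mul_const g) hK
  induction N with
  | zero => intro g; simp
  | succ N ih =>
    intro g
    by_cases hg : g ∈ Kset u L
    · have hg' : kappa g ∈ Set.Icc u (u + L) := hg
      obtain ⟨v, hv1, hv⟩ := exists_norm_eq g
      set v' : SS := ⟨v, by simpa [SS] using hv1⟩ with hv'
      refine le_trans ?_ (hW (sa g v'))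
      refine (Finset.sum_le_sum fun n _ => measure_mono ?_).trans (ENNReal.sum_le_tsum _)
      intro h hh
      have hh' : kappa (h * g) ∈ Set.Icc u (u + L) := hh
      show ‖T h (sa g v' : E2)‖ ≤ Real.exp L
      have hgp := opNorm_pos g
      have e1 : ‖T h (sa g v' : E2)‖ = (opNorm g)⁻¹ * ‖T (h * g) v‖ := by
        rw [sa_coe, map_smul, norm_smul, norm_inv, norm_norm, ← T_mul]
        show ‖T g v‖⁻¹ * _ = _
        rw [hv]
      have e2 := norm_T_le (h * g) v
      rw [hv1, mul_one] at e2
      rw [e1, inv_mul_le_iff₀ hgp]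
      refine e2.trans ?_
      rw [← exp_kappa, ← exp_kappa, ← Real.exp_add]
      apply Real.exp_le_exp.2
      linarith [hh'.2, hg'.1]
    · rw [Finset.sum_range_succ']
      have hz : cpow μ 0 {h | h * g ∈ Kset u L} = 0 := by
        rw [cpow, Measure.dirac_apply' _ (hmeas g)]
        simp [hg]
      rw [hz, add_zero]
      have hstep : ∀ n, cpow μ (n + 1) {h | h * g ∈ Kset u L} =
          ∫⁻ h', cpow μ n {h | h * (h' * g) ∈ Kset u L} ∂μ := by
        intro n
        rw [← lintegral_indicator_one (hmeas g),
          lint_succ' μ n (measurable_one.indicator (hmeas g))]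
        refine lintegral_congr fun h' => ?_
        rw [← lintegral_indicator_one (hmeas _)]
        refine lintegral_congr fun h => ?_
        have hiff : h * h' ∈ {h | h * g ∈ Kset u L} ↔ h ∈ {h | h * (h' * g) ∈ Kset u L} := by
          show h * h' * g ∈ Kset u L ↔ h * (h' * g) ∈ Kset u L
          rw [mul_assoc]
        by_cases hh : h ∈ {h | h * (h' * g) ∈ Kset u L}
        · rw [Set.indicator_of_mem hh, Set.indicator_of_mem (hiff.2 hh)]; rfl
        · rw [Set.indicator_of_notMem hh, Set.indicator_of_notMem (fun h3 => hh (hiff.1 h3))]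
      simp only [hstep]
      have hm : ∀ n, Measurable fun h' => cpow μ n {h | h * (h' * g) ∈ Kset u L} := by
        intro n
        have hS : MeasurableSet {p : SL2 × SL2 | p.2 * (p.1 * g) ∈ Kset u L} := by
          have : Measurable fun p : SL2 × SL2 => p.2 * (p.1 * g) := by fun_prop
          exact this hK
        exact measurable_measure_prodMk_left hS
      rw [← lintegral_finsetSum _ fun n _ => hm n]
      refine (lintegral_mono fun h' => ih (h' * g)).trans ?_
      simp

lemma renewal (μ : Measure SL2) [IsProbabilityMeasure μ] (hzd : ZariskiDense μ)
    {ε₁ : ℝ} (h1 : 0 < ε₁) (hM : Mo μ ε₁ < ⊤) :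
    ∃ C > (0 : ℝ), ∀ u L : ℝ, 0 ≤ L →
      ∑' n : ℕ, cpow μ n (Kset u L) ≤ ENNReal.ofReal (C * (1 + L)) := by
  obtain ⟨ε, hε, H⟩ := contraction μ hzd h1 hM
  obtain ⟨C, hC, c, hc, hJ⟩ := H ε hε le_rfl
  have he : Real.exp (-c) < 1 := Real.exp_lt_one_iff.2 (by linarith)
  have hden : 0 < 1 - Real.exp (-c) := by linarith
  refine ⟨1 + ε / c + C / (1 - Real.exp (-c)), by positivity, fun u L hL => ?_⟩
  refine ENNReal.tsum_le_of_sum_range_le fun N => ?_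
  have := renewal_max μ u L _ (low_norm_sum μ hε hC hc hJ L hL) N 1
  simpa using this

end RW

namespace RW

lemma T_sa (b h : SL2) (y : SS) : T b (sa h y : E2) = ‖T h (y : E2)‖⁻¹ • T (b * h) y := by
  rw [sa_coe, map_smul, ← T_mul]

lemma Bd_mul (b h : SL2) (y v : SS) (δ : ℝ) : b * h ∈ Bd y v δ ↔ b ∈ Bd (sa h y) v δ := by
  show |dt (T (b * h) y) v| ≤ δ * ‖T (b * h) y‖ ↔
    |dt (T b (sa h y : E2)) v| ≤ δ * ‖T b (sa h y : E2)‖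
  have hp : 0 < ‖T h (y : E2)‖⁻¹ := inv_pos.2 (normT_SS_pos h y)
  rw [T_sa, dt_smul_left, norm_smul, abs_mul, Real.norm_eq_abs, abs_of_pos hp, mul_left_comm,
    mul_le_mul_iff_right₀ hp]

lemma Bd_mono (y v : SS) {δ δ' : ℝ} (h : δ ≤ δ') : Bd y v δ ⊆ Bd y v δ' := by
  intro b hb
  have hb' : |dt (T b (y : E2)) v| ≤ δ * ‖T b (y : E2)‖ := hb
  show |dt (T b (y : E2)) v| ≤ δ' * ‖T b (y : E2)‖
  exact hb'.trans (by gcongr)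

lemma tail_bound (ν : Measure SL2) {ρ : ℝ} (hρ : 0 ≤ ρ) (t : ℝ) :
    ν {g | t ≤ kappa g} ≤ ENNReal.ofReal (Real.exp (-(ρ * t))) * Mo ν ρ := by
  have hm := (continuous_opNorm_rpow ρ).measurable.ennreal_ofReal
  rw [Mo, ← lintegral_const_mul _ hm]
  refine meas_le_lintegral₀ (hm.const_mul _).aemeasurable fun b hb => ?_
  have hb' : t ≤ kappa b := hb
  rw [← ENNReal.ofReal_mul (by positivity), ENNReal.one_le_ofReal, ← exp_kappa, ← Real.exp_mul,
    ← Real.exp_add]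
  apply Real.one_le_exp
  nlinarith

lemma Kset_mul_left {b h : SL2} {t a : ℝ} (hh : b * h ∈ Kset t a) {q : ℝ} (hq : kappa b ≤ q) :
    h ∈ Kset (t - q) (a + 2 * q) := by
  have h1 : kappa (b * h) ∈ Set.Icc t (t + a) := hh
  show kappa h ∈ Set.Icc (t - q) (t - q + (a + 2 * q))
  have h2 := kappa_mul_le b h
  have h3 := kappa_mul_le b⁻¹ (b * h)
  rw [inv_mul_cancel_left, kappa_inv] at h3
  constructor
  · linarith [h1.1]
  · linarith [h1.2]

def Sset (y v : SS) (s t a : ℝ) : Set SL2 := Bd y v (Real.exp (-s)) ∩ Kset t a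

lemma measurableSet_Sset (y v : SS) (s t a : ℝ) : MeasurableSet (Sset y v s t a) :=
  (isClosed_Bd _ _ _).measurableSet.inter (measurableSet_Kset _ _)

def Qset (s t a : ℝ) : Set (SL2 × SL2) := {p | s < kappa p.1 ∧ p.1 * p.2 ∈ Kset t a}

lemma measurableSet_Qset (s t a : ℝ) : MeasurableSet (Qset s t a) := by
  have h1 : MeasurableSet {p : SL2 × SL2 | s < kappa p.1} :=
    measurableSet_lt measurable_const (continuous_kappa.measurable.comp measurable_fst)
  have h2 : MeasurableSet {p : SL2 × SL2 | p.1 * p.2 ∈ Kset t a} := by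
    have : Measurable fun p : SL2 × SL2 => p.1 * p.2 := by fun_prop
    exact this (measurableSet_Kset t a)
  exact h1.inter h2

lemma split_bound (μ : Measure SL2) [IsProbabilityMeasure μ] (k m : ℕ) (y v : SS) (s t a : ℝ)
    (β : ENNReal) (hβ : ∀ y' : SS, cpow μ k (Bd y' v (Real.exp (-s))) ≤ β) :
    cpow μ (k + m) (Sset y v s t a) ≤ β * cpow μ m (Kset (t - s) (a + 2 * s)) +
      ∫⁻ b, cpow μ m (Prod.mk b ⁻¹' Qset s t a) ∂(cpow μ k) := by
  have hS := measurableSet_Sset y v s t a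
  have hQ := measurableSet_Qset s t a
  have hK := measurableSet_Kset (t - s) (a + 2 * s)
  have hpre : ∀ h : SL2, MeasurableSet {b | b * h ∈ Sset y v s t a} := fun h =>
    (measurable_mul_const h) hS
  have e1 : cpow μ (k + m) (Sset y v s t a) =
      ∫⁻ h, cpow μ k {b | b * h ∈ Sset y v s t a} ∂(cpow μ m) := by
    rw [← lintegral_indicator_one hS, lint_add' μ k m (measurable_one.indicator hS)]
    refine lintegral_congr fun h => ?_
    rw [← lintegral_indicator_one (hpre h)]
    refine lintegral_congr fun b => ?_
    by_cases hh : b * h ∈ Sset y v s t a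
    · have hh' : b ∈ {b | b * h ∈ Sset y v s t a} := hh
      rw [Set.indicator_of_mem hh, Set.indicator_of_mem hh']; rfl
    · have hh' : b ∉ {b | b * h ∈ Sset y v s t a} := hh
      rw [Set.indicator_of_notMem hh, Set.indicator_of_notMem hh']
  have e2 : ∫⁻ b, cpow μ m (Prod.mk b ⁻¹' Qset s t a) ∂(cpow μ k) =
      ∫⁻ h, cpow μ k ((fun b => (b, h)) ⁻¹' Qset s t a) ∂(cpow μ m) := by
    rw [← Measure.prod_apply hQ, Measure.prod_apply_symm hQ]
  have e3 : β * cpow μ m (Kset (t - s) (a + 2 * s)) =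
      ∫⁻ h, (Kset (t - s) (a + 2 * s)).indicator (fun _ => β) h ∂(cpow μ m) := by
    rw [lintegral_indicator_const hK]
  rw [e1, e2, e3, ← lintegral_add_left (measurable_const.indicator hK)]
  refine lintegral_mono fun h => ?_
  have hsub : {b | b * h ∈ Sset y v s t a} ⊆
      {b | b * h ∈ Sset y v s t a ∧ kappa b ≤ s} ∪ ((fun b => (b, h)) ⁻¹' Qset s t a) := by
    intro b hb
    have hb' : b * h ∈ Sset y v s t a := hb
    rcases le_or_gt (kappa b) s with h1 | h1
    · exact Or.inl ⟨hb', h1⟩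
    · exact Or.inr ⟨h1, hb'.2⟩
  refine (measure_mono hsub).trans ((measure_union_le _ _).trans ?_)
  gcongr
  by_cases hh : h ∈ Kset (t - s) (a + 2 * s)
  · rw [Set.indicator_of_mem hh]
    refine (measure_mono ?_).trans (hβ (sa h y))
    intro b hb
    have hb' : b * h ∈ Sset y v s t a := hb.1
    exact (Bd_mul b h y v _).1 hb'.1
  · have : {b | b * h ∈ Sset y v s t a ∧ kappa b ≤ s} = ∅ := by
      ext b
      simp only [Set.mem_empty_iff_false, iff_false]
      intro hb
      have hb' : b * h ∈ Sset y v s t a := hb.1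
      exact hh (Kset_mul_left hb'.2 hb.2)
    rw [this]; simp

lemma Q_sum (μ : Measure SL2) [IsProbabilityMeasure μ] {CR : ℝ} (hCR : 0 < CR)
    (hR : ∀ u L : ℝ, 0 ≤ L → ∑' n : ℕ, cpow μ n (Kset u L) ≤ ENNReal.ofReal (CR * (1 + L)))
    {ρ : ℝ} (hρ : 0 < ρ) (k : ℕ) (s t a : ℝ) (hs : 0 < s) (ha : 0 < a) :
    ∑' m : ℕ, ∫⁻ b, cpow μ m (Prod.mk b ⁻¹' Qset s t a) ∂(cpow μ k) ≤
      ENNReal.ofReal (CR * (1 + a) * (1 + 2 / ρ) * Real.exp (-(ρ * s))) *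
        Mo (cpow μ k) (2 * ρ) := by
  have hQ := measurableSet_Qset s t a
  have hm := (continuous_opNorm_rpow (2 * ρ)).measurable.ennreal_ofReal
  rw [← lintegral_tsum fun m => (measurable_measure_prodMk_left hQ).aemeasurable, Mo,
    ← lintegral_const_mul _ hm]
  refine lintegral_mono fun b => ?_
  rw [← ENNReal.ofReal_mul (by positivity)]
  by_cases hb : s < kappa b
  · have h1 : ∀ m : ℕ, cpow μ m (Prod.mk b ⁻¹' Qset s t a) ≤
        cpow μ m (Kset (t - kappa b) (a + 2 * kappa b)) := by
      intro m
      refine measure_mono fun h hh => ?_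
      have hh' : b * h ∈ Kset t a := hh.2
      exact Kset_mul_left hh' le_rfl
    have h0 := kappa_nonneg b
    refine (ENNReal.tsum_le_tsum h1).trans ((hR _ _ (by positivity)).trans ?_)
    apply ENNReal.ofReal_le_ofReal
    have h2 := kappa_le_rpow b hρ
    have hx : opNorm b ^ ρ = Real.exp (ρ * kappa b) := by
      rw [← exp_kappa, ← Real.exp_mul, mul_comm]
    have hx2 : opNorm b ^ (2 * ρ) = Real.exp (2 * ρ * kappa b) := by
      rw [← exp_kappa, ← Real.exp_mul, mul_comm]
    rw [hx] at h2
    rw [hx2, mul_assoc (CR * (1 + a) * (1 + 2 / ρ)), ← Real.exp_add]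
    have h3 : Real.exp (ρ * kappa b) ≤ Real.exp (-(ρ * s) + 2 * ρ * kappa b) := by
      apply Real.exp_le_exp.2; nlinarith
    have h4 : 1 ≤ Real.exp (ρ * kappa b) := Real.one_le_exp (by positivity)
    have h5 : 1 + 2 * kappa b ≤ (1 + 2 / ρ) * Real.exp (ρ * kappa b) := by
      have : Real.exp (ρ * kappa b) / ρ = 1 / ρ * Real.exp (ρ * kappa b) := by ring
      rw [this] at h2
      have : 2 / ρ = 2 * (1 / ρ) := by ring
      rw [this]; nlinarith
    calc CR * (1 + (a + 2 * kappa b)) ≤ CR * (1 + a) * (1 + 2 * kappa b) := by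
          nlinarith [mul_pos hCR ha, mul_nonneg (mul_pos hCR ha).le h0]
      _ ≤ CR * (1 + a) * ((1 + 2 / ρ) * Real.exp (ρ * kappa b)) := by gcongr
      _ ≤ CR * (1 + a) * ((1 + 2 / ρ) * Real.exp (-(ρ * s) + 2 * ρ * kappa b)) := by gcongr
      _ = _ := by ring
  · have h1 : ∀ m : ℕ, cpow μ m (Prod.mk b ⁻¹' Qset s t a) = 0 := by
      intro m
      have : Prod.mk b ⁻¹' Qset s t a = ∅ := by
        ext h
        simp only [Set.mem_empty_iff_false, iff_false]
        intro hh
        exact hb hh.1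
      rw [this]; simp
    simp [h1]

end RW

namespace RW

set_option maxHeartbeats 1000000 in
lemma Sset_sum (μ : Measure SL2) [IsProbabilityMeasure μ] (hzd : ZariskiDense μ)
    {ε₁ : ℝ} (h1 : 0 < ε₁) (hM : Mo μ ε₁ < ⊤) :
    ∃ C > (0 : ℝ), ∃ ε' > (0 : ℝ), ∀ (s a t : ℝ) (y v : SS), 0 < s → 0 < a → 10 * s < t →
      ∑' n : ℕ, cpow μ n (Sset y v s t a) ≤
        ENNReal.ofReal (C * (1 + a) * Real.exp (-(ε' * s))) := by
  obtain ⟨e, he, CB, hCB, cB, hcB, HB⟩ := Bd_bound μ hzd h1 hM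
  obtain ⟨CR, hCR, HR⟩ := renewal μ hzd h1 hM
  obtain ⟨ρ, hρ, hρ2⟩ : ∃ ρ : ℝ, 0 < ρ ∧ 2 * ρ = ε₁ := ⟨ε₁ / 2, by positivity, by ring⟩
  obtain ⟨lam, hlam, hMl⟩ : ∃ lam : ℝ, 1 ≤ lam ∧ Mo μ (2 * ρ) ≤ ENNReal.ofReal (Real.exp lam) := by
    refine ⟨max 1 (Mo μ ε₁).toReal, le_max_left _ _, ?_⟩
    rw [hρ2, ← ENNReal.ofReal_toReal hM.ne]
    apply ENNReal.ofReal_le_ofReal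
    have h3 := Real.add_one_le_exp (max 1 (Mo μ ε₁).toReal)
    have h4 := le_max_right 1 (Mo μ ε₁).toReal
    rw [ENNReal.toReal_ofReal ENNReal.toReal_nonneg]
    linarith
  have hlam0 : 0 < lam := by linarith
  have hMk : ∀ n : ℕ, Mo (cpow μ n) (2 * ρ) ≤ ENNReal.ofReal (Real.exp (lam * n)) := by
    intro n
    refine (Mo_cpow μ (by positivity) n).trans ((pow_le_pow_left' hMl n).trans (le_of_eq ?_))
    rw [← ENNReal.ofReal_pow (Real.exp_pos _).le, ← Real.exp_nat_mul, mul_comm]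
  set α := ρ / (2 * lam) with hα
  have hα0 : 0 < α := by positivity
  have hαl : lam * α = ρ / 2 := by rw [hα]; field_simp
  set η := min 1 (cB * α / (4 * e)) with hη
  have hη0 : 0 < η := by positivity
  have hη1 : η ≤ 1 := min_le_left _ _
  have hη2 : 2 * e * η ≤ cB * α / 2 := by
    have : η ≤ cB * α / (4 * e) := min_le_right _ _
    rw [le_div_iff₀ (by positivity)] at this
    linarith
  set θ := min (e * η) (cB * α / 2) with hθ
  have hθ0 : 0 < θ := by positivity
  have hθ1 : θ ≤ e * η := min_le_left _ _
  have hθ2 : θ ≤ cB * α / 2 := min_le_right _ _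
  set ε' := min (θ / 2) (ρ / 2) with hε'
  have hε'0 : 0 < ε' := by positivity
  have hε'1 : ε' ≤ θ / 2 := min_le_left _ _
  have hε'2 : ε' ≤ ρ / 2 := min_le_right _ _
  set A1 := Real.exp (2 * lam) with hA1
  set A2 := 2 * CB * (CR * (1 + 4 / θ)) with hA2
  set A3 := CR * (1 + 2 / ρ) * Real.exp lam with hA3
  have hA1p : 0 < A1 := Real.exp_pos _
  have hA2p : 0 < A2 := by positivity
  have hA3p : 0 < A3 := by positivity
  refine ⟨A1 + A2 + A3, by positivity, ε', hε'0, ?_⟩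
  intro s a t y v hs ha ht
  set k := ⌈α * s⌉₊ with hk
  have hk1 : α * s ≤ k := Nat.le_ceil _
  have hk2 : (k : ℝ) ≤ α * s + 1 := (Nat.ceil_lt_add_one (by positivity)).le
  have hlk : lam * k ≤ lam + ρ / 2 * s := by
    have := mul_le_mul_of_nonneg_left hk2 hlam0.le
    rw [mul_add, ← mul_assoc, hαl] at this
    linarith
  have hE : Real.exp (-(θ / 2 * s)) ≤ Real.exp (-(ε' * s)) := by
    apply Real.exp_le_exp.2; nlinarith
  have hE2 : Real.exp (-(ρ / 2 * s)) ≤ Real.exp (-(ε' * s)) := by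
    apply Real.exp_le_exp.2; nlinarith
  have hEp := Real.exp_pos (-(ε' * s))
  -- first part
  have P1 : ∑ n ∈ Finset.range k, cpow μ n (Sset y v s t a) ≤
      ENNReal.ofReal (A1 * (1 + a) * Real.exp (-(ε' * s))) := by
    have hn : ∀ n ∈ Finset.range k, cpow μ n (Sset y v s t a) ≤
        ENNReal.ofReal (Real.exp (-(2 * ρ * (10 * s)) + lam * k)) := by
      intro n hn
      have hnk : (n : ℝ) ≤ k := by exact_mod_cast (Finset.mem_range.1 hn).le
      have hsub : Sset y v s t a ⊆ {g | t ≤ kappa g} := by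
        intro g hg
        have hg' : kappa g ∈ Set.Icc t (t + a) := hg.2
        exact hg'.1
      refine (measure_mono hsub).trans ((tail_bound _ (by positivity : 0 ≤ 2 * ρ) t).trans ?_)
      refine (mul_le_mul_right (hMk n) _).trans ?_
      rw [← ENNReal.ofReal_mul (Real.exp_pos _).le, ← Real.exp_add]
      apply ENNReal.ofReal_le_ofReal
      apply Real.exp_le_exp.2
      have := mul_le_mul_of_nonneg_left hnk hlam0.le
      have := mul_le_mul_of_nonneg_left ht.le (by positivity : 0 ≤ 2 * ρ)
      linarith
    refine (Finset.sum_le_sum hn).trans ?_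
    rw [Finset.sum_const, Finset.card_range, nsmul_eq_mul, ← ENNReal.ofReal_natCast,
      ← ENNReal.ofReal_mul (by positivity)]
    apply ENNReal.ofReal_le_ofReal
    have hke : (k : ℝ) ≤ Real.exp (lam * k) := by
      have := Real.add_one_le_exp (lam * k)
      have hk0 : (0 : ℝ) ≤ k := by positivity
      nlinarith
    calc (k : ℝ) * Real.exp (-(2 * ρ * (10 * s)) + lam * k)
        ≤ Real.exp (lam * k) * Real.exp (-(2 * ρ * (10 * s)) + lam * k) := by gcongr
      _ = Real.exp (lam * k + (-(2 * ρ * (10 * s)) + lam * k)) := (Real.exp_add _ _).symm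
      _ ≤ Real.exp (2 * lam + (-(ε' * s))) := by
          apply Real.exp_le_exp.2
          nlinarith [mul_pos hρ hs]
      _ = A1 * Real.exp (-(ε' * s)) := by rw [Real.exp_add]
      _ ≤ A1 * (1 + a) * Real.exp (-(ε' * s)) := by
          refine mul_le_mul_of_nonneg_right ?_ hEp.le
          exact le_mul_of_one_le_right hA1p.le (by linarith)
  -- second part
  have hβ : ∀ y' : SS, cpow μ k (Bd y' v (Real.exp (-s))) ≤
      ENNReal.ofReal (2 * CB * Real.exp (-(θ * s))) := by
    intro y'
    have hm : Real.exp (-s) ≤ Real.exp (-(η * s)) := by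
      apply Real.exp_le_exp.2; nlinarith
    refine (measure_mono (Bd_mono y' v hm)).trans ((HB (η * s) k y' v).trans ?_)
    apply ENNReal.ofReal_le_ofReal
    have g1 : Real.exp (-(e * (η * s))) ≤ Real.exp (-(θ * s)) := by
      apply Real.exp_le_exp.2; nlinarith
    have g2 : Real.exp (2 * e * (η * s) - cB * k) ≤ Real.exp (-(θ * s)) := by
      apply Real.exp_le_exp.2
      have := mul_le_mul_of_nonneg_left hk1 hcB.le
      have := mul_le_mul_of_nonneg_right hη2 hs.le
      have := mul_le_mul_of_nonneg_right hθ2 hs.le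
      nlinarith
    nlinarith
  have P2 : ∑' m : ℕ, ENNReal.ofReal (2 * CB * Real.exp (-(θ * s))) *
      cpow μ m (Kset (t - s) (a + 2 * s)) ≤
      ENNReal.ofReal (A2 * (1 + a) * Real.exp (-(ε' * s))) := by
    rw [ENNReal.tsum_mul_left]
    refine (mul_le_mul_right (HR (t - s) (a + 2 * s) (by positivity)) _).trans ?_
    rw [← ENNReal.ofReal_mul (by positivity)]
    apply ENNReal.ofReal_le_ofReal
    have hx := Real.add_one_le_exp (θ / 2 * s)
    have h4 : 1 + (a + 2 * s) ≤ (1 + a) * ((1 + 4 / θ) * Real.exp (θ / 2 * s)) := by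
      have i1 : 1 ≤ Real.exp (θ / 2 * s) := Real.one_le_exp (by positivity)
      have i2 : 2 * s ≤ 4 / θ * Real.exp (θ / 2 * s) := by
        have : 2 * s = 4 / θ * (θ / 2 * s) := by field_simp; ring
        rw [this]; gcongr; linarith
      have i3 : 1 + 2 * s ≤ (1 + 4 / θ) * Real.exp (θ / 2 * s) := by linarith
      calc 1 + (a + 2 * s) ≤ (1 + a) * (1 + 2 * s) := by nlinarith [mul_pos ha hs]
        _ ≤ _ := by gcongr
    calc 2 * CB * Real.exp (-(θ * s)) * (CR * (1 + (a + 2 * s)))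
        ≤ 2 * CB * Real.exp (-(θ * s)) * (CR * ((1 + a) * ((1 + 4 / θ) * Real.exp (θ / 2 * s)))) := by
          gcongr
      _ = A2 * (1 + a) * (Real.exp (-(θ * s)) * Real.exp (θ / 2 * s)) := by rw [hA2]; ring
      _ = A2 * (1 + a) * Real.exp (-(θ / 2 * s)) := by
          rw [← Real.exp_add]; congr 2; ring
      _ ≤ _ := by gcongr
  have P3 : ∑' m : ℕ, ∫⁻ b, cpow μ m (Prod.mk b ⁻¹' Qset s t a) ∂(cpow μ k) ≤
      ENNReal.ofReal (A3 * (1 + a) * Real.exp (-(ε' * s))) := by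
    refine (Q_sum μ hCR HR hρ k s t a hs ha).trans ?_
    refine (mul_le_mul_right (hMk k) _).trans ?_
    rw [← ENNReal.ofReal_mul (by positivity)]
    apply ENNReal.ofReal_le_ofReal
    calc CR * (1 + a) * (1 + 2 / ρ) * Real.exp (-(ρ * s)) * Real.exp (lam * k)
        = CR * (1 + a) * (1 + 2 / ρ) * Real.exp (-(ρ * s) + lam * k) := by
          rw [Real.exp_add]; ring
      _ ≤ CR * (1 + a) * (1 + 2 / ρ) * Real.exp (lam + -(ρ / 2 * s)) := by
          gcongr ?_ * Real.exp ?_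
          linarith
      _ = A3 * (1 + a) * Real.exp (-(ρ / 2 * s)) := by rw [Real.exp_add, hA3]; ring
      _ ≤ _ := by gcongr
  rw [← Summable.sum_add_tsum_nat_add' (k := k) ENNReal.summable]
  have P4 : ∑' m : ℕ, cpow μ (m + k) (Sset y v s t a) ≤
      ENNReal.ofReal (A2 * (1 + a) * Real.exp (-(ε' * s))) +
      ENNReal.ofReal (A3 * (1 + a) * Real.exp (-(ε' * s))) := by
    refine le_trans ?_ (add_le_add P2 P3)
    rw [← ENNReal.tsum_add]
    refine ENNReal.tsum_le_tsum fun m => ?_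
    rw [add_comm m k]
    exact split_bound μ k m y v s t a _ hβ
  refine (add_le_add P1 P4).trans (le_of_eq ?_)
  rw [← ENNReal.ofReal_add (by positivity) (by positivity),
    ← ENNReal.ofReal_add (by positivity) (by positivity)]
  congr 1; ring

/-! ### Projective line -/

def vec (v : Fin 2 → ℝ) : E2 := WithLp.toLp 2 v

lemma norm_vec (v : Fin 2 → ℝ) : ‖vec v‖ = enorm2 v := by
  rw [EuclideanSpace.norm_eq, enorm2]; simp [vec]

lemma vec_ne {v : Fin 2 → ℝ} (hv : v ≠ 0) : 0 < ‖vec v‖ := by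
  rw [norm_pos_iff]
  intro h
  apply hv
  funext i
  have := congrArg (fun w : E2 => w i) h
  simpa [vec] using this

def un (x : PX) : SS :=
  ⟨‖vec x.rep‖⁻¹ • vec x.rep, by
    have := vec_ne x.rep_nonzero
    simp [SS, norm_smul, inv_mul_cancel₀ this.ne']⟩

lemma T_vec (g : SL2) (v : Fin 2 → ℝ) :
    T g (vec v) = vec ((g : Matrix (Fin 2) (Fin 2) ℝ).mulVec v) := by
  ext i
  fin_cases i <;> simp [T_zero, T_one', vec]

lemma act_rep (g : SL2) (x : PX) : ∃ c : ℝ, c ≠ 0 ∧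
    (act g x).rep = c • (g : Matrix (Fin 2) (Fin 2) ℝ).mulVec x.rep := by
  have hx := x.rep_nonzero
  have hinj : Function.Injective (Matrix.SpecialLinearGroup.toLin' g).toLinearMap :=
    LinearEquiv.injective _
  have hne : (Matrix.SpecialLinearGroup.toLin' g).toLinearMap x.rep ≠ 0 := by
    intro h
    exact hx (hinj (by rw [h, map_zero]))
  have e : act g x = Projectivization.mk ℝ
      ((Matrix.SpecialLinearGroup.toLin' g).toLinearMap x.rep) hne := by
    conv_lhs => rw [act, ← x.mk_rep]
    rw [Projectivization.map_mk]
  obtain ⟨c, hc⟩ := Projectivization.exists_smul_eq_mk_rep ℝ _ hne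
  refine ⟨c, c.ne_zero, ?_⟩
  rw [e, ← hc]
  rfl

lemma projDist_eq (g : SL2) (x x' : PX) :
    projDist (act g x) x' = |dt (T g (un x)) (un x')| / ‖T g (un x : E2)‖ := by
  obtain ⟨c, hc, h⟩ := act_rep g x
  have hx := vec_ne x.rep_nonzero
  have hx' := vec_ne x'.rep_nonzero
  have hw : 0 < ‖vec ((g : Matrix (Fin 2) (Fin 2) ℝ).mulVec x.rep)‖ := by
    rw [← T_vec]; exact norm_T_pos g hx
  have e1 : projDist (act g x) x' = |dt (vec (act g x).rep) (vec x'.rep)| /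
      (‖vec (act g x).rep‖ * ‖vec x'.rep‖) := by
    rw [norm_vec, norm_vec]; rfl
  have e2 : vec (act g x).rep = c • vec ((g : Matrix (Fin 2) (Fin 2) ℝ).mulVec x.rep) := by
    rw [h]; rfl
  have e3 : T g (un x : E2) = ‖vec x.rep‖⁻¹ • vec ((g : Matrix (Fin 2) (Fin 2) ℝ).mulVec x.rep) := by
    show T g (‖vec x.rep‖⁻¹ • vec x.rep) = _
    rw [map_smul, T_vec]
  have e4 : (un x' : E2) = ‖vec x'.rep‖⁻¹ • vec x'.rep := rfl
  rw [e1, e2, e3, e4, dt_smul_left, dt_smul_left, dt_smul_right, norm_smul, norm_smul, abs_mul,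
    abs_mul, abs_mul, Real.norm_eq_abs, Real.norm_eq_abs, abs_of_pos (inv_pos.2 hx),
    abs_of_pos (inv_pos.2 hx')]
  have hc' : 0 < |c| := abs_pos.2 hc
  field_simp

lemma mem_Sset_iff (g : SL2) (x x' : PX) (s t a : ℝ) :
    (projDist (act g x) x' ≤ Real.exp (-s) ∧ kappa g - t ∈ Set.Icc 0 a) ↔
      g ∈ Sset (un x) (un x') s t a := by
  rw [projDist_eq, div_le_iff₀ (normT_SS_pos g (un x))]
  refine and_congr Iff.rfl ?_
  show (0 ≤ kappa g - t ∧ kappa g - t ≤ a) ↔ (t ≤ kappa g ∧ kappa g ≤ t + a)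
  constructor <;> rintro ⟨h1, h2⟩ <;> constructor <;> linarith

end RW

theorem renewal_independence_cartan
    (μ : Measure SL2) [IsProbabilityMeasure μ]
    (hmom : HasExpMoment μ) (hzd : ZariskiDense μ) :
    ∃ C > (0 : ℝ), ∃ ε' > (0 : ℝ), ∀ (s a t : ℝ) (x x' : PX),
      0 < s → 0 < a → 10 * s < t →
      (∑' n : ℕ, μpi μ n {g | projDist (act (word g) x) x' ≤ Real.exp (-s) ∧
          kappa (word g) - t ∈ Set.Icc 0 a}) ≤
        ENNReal.ofReal (C * (1 + a) ^ 2 * Real.exp (-(ε' * s))) := by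
  obtain ⟨ε₁, h1, hM⟩ := hmom
  obtain ⟨C, hC, ε', hε', H⟩ := RW.Sset_sum μ hzd h1 hM
  refine ⟨C, hC, ε', hε', fun s a t x x' hs ha ht => ?_⟩
  have hn : ∀ n : ℕ, μpi μ n {g | projDist (act (word g) x) x' ≤ Real.exp (-s) ∧
      kappa (word g) - t ∈ Set.Icc 0 a} =
      RW.cpow μ n (RW.Sset (RW.un x) (RW.un x') s t a) := by
    intro n
    rw [← RW.μpi_word μ n (RW.measurableSet_Sset _ _ _ _ _)]
    congr 1
    ext w
    exact RW.mem_Sset_iff (word w) x x' s t a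
  simp only [hn]
  refine (H s a t _ _ hs ha ht).trans ?_
  apply ENNReal.ofReal_le_ofReal
  have hp := Real.exp_pos (-(ε' * s))
  gcongr
  nlinarith

end
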